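/- arXiv:2401.00837 — 2 statements merged into one kernel-verified Lean document; each statement's English description precedes it below -/
import Mathlib

section
/- Let S ⊆ {-1,0,1}^d \ {0} be a step set (with positive weights) that is symmetric over every coordinate axis. Then for every n ≥ 0, the total weight s_n of walks of length n taking steps in S, beginning at the origin, and never leaving ℕ^d equals the coefficient of z_1^n ··· z_d^n t^n in the power series expansion (around the origin) of the rational function (1+z_1)···(1+z_d) / (1 - t (z_1···z_d) S(z)). -/
/-!
By the reflection principle, `s_n` is the sum of `∏ j, sign (y j + 1)` over the endpoints `y` of all
unconfined weighted walks of length `n` from the origin: this function is `1` on `ℕ^d` and odd about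
each hyperplane `y_k = -1`, through which every walk leaving `ℕ^d` passes. Since the step set is
symmetric, each factor may be changed by an odd function, and
`sign (y + 1) - sign y = [y = -1] + [y = 0]`. On the other side, the coefficient of
`z_1^n ⋯ z_d^n t^n` is that of `z^0` in `∏ j, (1 + z_j) * S(z)^n`, which sums the weights of the
unconfined walks ending in `{-1, 0}^d`.
-/

open Finset Filter
open scoped Classical

noncomputable section

/-- Total weight of walks of length `n` with steps in `S` (weighted by `w`),
starting at the origin and never leaving `ℕ^d`. -/
def walkWeight (d : ℕ) (S : Finset (Fin d → ℤ)) (w : (Fin d → ℤ) → ℝ) (n : ℕ) : ℝ :=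
  ∑ f : Fin n → {i // i ∈ S},
    if ∀ m : ℕ, m ≤ n → ∀ j : Fin d,
        0 ≤ ∑ k ∈ Finset.univ.filter (fun k : Fin n => (k : ℕ) < m), ((f k : Fin d → ℤ) j)
    then ∏ k : Fin n, w (f k) else 0

/-- The step set `S` (with weights `w`) is symmetric over the `k`-th coordinate axis. -/
def SymmetricAxis (d : ℕ) (S : Finset (Fin d → ℤ)) (w : (Fin d → ℤ) → ℝ) (k : Fin d) : Prop :=
  ∀ i ∈ S, Function.update i k (-(i k)) ∈ S ∧ w (Function.update i k (-(i k))) = w i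

/-- The polynomial `(z_1⋯z_d)·S(z)` as a multivariate power series in the variables
`z_1,…,z_d,t` (the variable `z_j` is `X (Fin.castSucc j)` and `t` is `X (Fin.last d)`). -/
def zProdS (d : ℕ) (S : Finset (Fin d → ℤ)) (w : (Fin d → ℤ) → ℝ) :
    MvPowerSeries (Fin (d + 1)) ℝ :=
  ∑ i ∈ S, MvPowerSeries.C (σ := Fin (d + 1)) (R := ℝ) (w i) *
    ∏ j : Fin d, MvPowerSeries.X (Fin.castSucc j) ^ (i j + 1).toNat

section WalkSum

variable {G R : Type*} [AddCommMonoid G]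

/-- Sum of `φ` over the endpoints of the walks of length `n` with steps in `S` that start at `x` and
never leave `C`, each walk carrying the product of the weights of its steps. Unconfined walks are
the case `C = Set.univ`. -/
def walkSum [CommSemiring R] (S : Finset G) (w : G → R) (C : Set G) (n : ℕ) (φ : G → R) (x : G) :
    R :=
  ∑ f : Fin n → S,
    if ∀ m ≤ n, x + ∑ k with k.val < m, (f k : G) ∈ C then
      (∏ k, w (f k)) * φ (x + ∑ k, (f k : G))
    else 0

section CommSemiring

variable [CommSemiring R] {S : Finset G} {w : G → R} {C : Set G} {φ : G → R} {x : G}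

lemma walkSum_univ (n : ℕ) :
    walkSum S w Set.univ n φ x =
      ∑ f : Fin n → S, (∏ k, w (f k)) * φ (x + ∑ k, (f k : G)) := by
  simp only [walkSum, Set.mem_univ, implies_true, if_true]

lemma walkSum_of_notMem (hx : x ∉ C) (n : ℕ) : walkSum S w C n φ x = 0 :=
  Finset.sum_eq_zero fun f _ => if_neg fun h => hx (by simpa using h 0 n.zero_le)

lemma walkSum_zero (hx : x ∈ C) : walkSum S w C 0 φ x = φ x := by
  simp [walkSum, hx]

lemma confined_cons_iff (hx : x ∈ C) {n : ℕ} (i : S) (f : Fin n → S) :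
    (∀ m ≤ n + 1, x + ∑ k with k.val < m, ((Fin.cons i f : Fin (n + 1) → S) k : G) ∈ C) ↔
      ∀ m ≤ n, x + i + ∑ k with k.val < m, (f k : G) ∈ C := by
  simp only [← Nat.lt_succ_iff, Nat.forall_lt_succ_left (n := n + 1)]
  simp [Finset.sum_filter, Fin.sum_univ_succ, hx, add_assoc]

lemma walkSum_succ (hx : x ∈ C) (n : ℕ) :
    walkSum S w C (n + 1) φ x = ∑ i ∈ S, w i * walkSum S w C n φ (x + i) := by
  rw [walkSum, ← (Fin.consEquiv fun _ => S).sum_comp, Fintype.sum_prod_type,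
    ← Finset.sum_coe_sort S]
  refine Finset.sum_congr rfl fun i _ => ?_
  rw [walkSum, Finset.mul_sum]
  refine Finset.sum_congr rfl fun f _ => ?_
  simp only [Fin.consEquiv_apply, confined_cons_iff hx, mul_ite, mul_zero, Fin.prod_univ_succ,
    Fin.sum_univ_succ, Fin.cons_zero, Fin.cons_succ, mul_assoc, add_assoc]

lemma walkSum_univ_add (φ ψ : G → R) (n : ℕ) (x : G) :
    walkSum S w Set.univ n (φ + ψ) x =
      walkSum S w Set.univ n φ x + walkSum S w Set.univ n ψ x := by
  simp only [walkSum_univ, Pi.add_apply, mul_add, Finset.sum_add_distrib]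

lemma walkSum_preimage_comp {ρ : Equiv.Perm G} {σ : G → G} (hS : ∀ i, i ∈ S ↔ ρ i ∈ S)
    (hw : ∀ i ∈ S, w (ρ i) = w i) (hσ : ∀ x, ∀ i ∈ S, σ (x + i) = σ x + ρ i) (n : ℕ) :
    walkSum S w (σ ⁻¹' C) n (φ ∘ σ) x = walkSum S w C n φ (σ x) := by
  by_cases hx : σ x ∈ C
  · induction n generalizing x with
    | zero => rw [walkSum_zero hx, walkSum_zero (Set.mem_preimage.2 hx), Function.comp_apply]
    | succ n ih =>
      rw [walkSum_succ hx, walkSum_succ (Set.mem_preimage.2 hx)]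
      refine Finset.sum_equiv ρ hS fun i hi => ?_
      rw [hw i hi, ← hσ x i hi]
      by_cases hxi : σ (x + i) ∈ C
      · rw [ih hxi]
      · rw [walkSum_of_notMem hxi, walkSum_of_notMem (C := σ ⁻¹' C) hxi]
  · rw [walkSum_of_notMem hx, walkSum_of_notMem (C := σ ⁻¹' C) hx]

lemma walkSum_eq_walkSum_univ
    (hexit : ∀ n, ∀ x ∈ C, ∀ i ∈ S, x + i ∉ C → walkSum S w Set.univ n φ (x + i) = 0)
    (hx : x ∈ C) (n : ℕ) : walkSum S w C n φ x = walkSum S w Set.univ n φ x := by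
  induction n generalizing x with
  | zero => rw [walkSum_zero hx, walkSum_zero (Set.mem_univ x)]
  | succ n ih =>
    rw [walkSum_succ hx, walkSum_succ (Set.mem_univ x)]
    refine Finset.sum_congr rfl fun i hi => ?_
    by_cases hxi : x + i ∈ C
    · rw [ih hxi]
    · rw [walkSum_of_notMem hxi, hexit n x hx i hi hxi]

end CommSemiring

lemma walkSum_univ_neg [CommRing R] (S : Finset G) (w φ : G → R) (n : ℕ) (x : G) :
    walkSum S w Set.univ n (-φ) x = -walkSum S w Set.univ n φ x := by
  simp only [walkSum_univ, Pi.neg_apply, mul_neg, Finset.sum_neg_distrib]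

end WalkSum

section CoordProd

variable {ι R : Type*} [DecidableEq ι]

/-- Reflection of the `k`-th coordinate about `c / 2`. -/
def reflectCoord (k : ι) (c : ℤ) (x : ι → ℤ) : ι → ℤ :=
  Function.update x k (c - x k)

lemma reflectCoord_involutive (k : ι) (c : ℤ) : Function.Involutive (reflectCoord k c) := by
  intro x
  simp [reflectCoord]

lemma reflectCoord_add (k : ι) (c : ℤ) (x i : ι → ℤ) :
    reflectCoord k c (x + i) = reflectCoord k c x + reflectCoord k 0 i := by
  ext j
  obtain rfl | hj := eq_or_ne j k
  · simp only [reflectCoord, Pi.add_apply, Function.update_self]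
    ring
  · simp [reflectCoord, hj]

lemma reflectCoord_eq_self {k : ι} {c : ℤ} {x : ι → ℤ} (hx : x k + x k = c) :
    reflectCoord k c x = x := by
  rw [reflectCoord, sub_eq_of_eq_add hx.symm, Function.update_eq_self]

/-- The product function `x ↦ ∏ j, Φ j (x j)` on `ℤ^ι`. -/
def coordProd [Fintype ι] [CommMonoid R] (Φ : ι → ℤ → R) (x : ι → ℤ) : R :=
  ∏ j, Φ j (x j)

variable [Fintype ι]

lemma coordProd_update [CommMonoid R] (Φ : ι → ℤ → R) (k : ι) (g : ℤ → R) (x : ι → ℤ) :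
    coordProd (Function.update Φ k g) x = g (x k) * ∏ j ∈ univ.erase k, Φ j (x j) := by
  rw [coordProd, ← Finset.mul_prod_erase univ _ (Finset.mem_univ k), Function.update_self]
  congr 1
  refine Finset.prod_congr rfl fun j hj => ?_
  rw [Function.update_of_ne (Finset.ne_of_mem_erase hj)]

lemma coordProd_update_add [CommSemiring R] (Φ : ι → ℤ → R) (k : ι) (g h : ℤ → R) :
    coordProd (Function.update Φ k (g + h)) =
      coordProd (Function.update Φ k g) + coordProd (Function.update Φ k h) := by
  funext x
  simp only [Pi.add_apply, coordProd_update, add_mul]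

lemma coordProd_reflectCoord [CommRing R] {Φ : ι → ℤ → R} {k : ι} {c : ℤ}
    (hΦ : ∀ y, Φ k (c - y) = -Φ k y) (x : ι → ℤ) :
    coordProd Φ (reflectCoord k c x) = -coordProd Φ x := by
  simp only [coordProd]
  rw [← Finset.mul_prod_erase univ (fun j => Φ j (x j)) (Finset.mem_univ k), ← neg_mul, ← hΦ,
    ← Finset.mul_prod_erase univ _ (Finset.mem_univ k), reflectCoord, Function.update_self]
  congr 1
  refine Finset.prod_congr rfl fun j hj => ?_
  rw [Function.update_of_ne (Finset.ne_of_mem_erase hj)]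

end CoordProd

section Symmetry

variable {d : ℕ} {S : Finset (Fin d → ℤ)} {w : (Fin d → ℤ) → ℝ} {k : Fin d}

lemma SymmetricAxis.reflectCoord_mem_iff (hk : SymmetricAxis d S w k) (i : Fin d → ℤ) :
    i ∈ S ↔ reflectCoord k 0 i ∈ S := by
  have hmem : ∀ i ∈ S, reflectCoord k 0 i ∈ S := fun i hi => by
    simpa only [reflectCoord, zero_sub] using (hk i hi).1
  exact ⟨hmem i, fun hi => reflectCoord_involutive k 0 i ▸ hmem _ hi⟩

lemma SymmetricAxis.weight_reflectCoord (hk : SymmetricAxis d S w k) {i : Fin d → ℤ}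
    (hi : i ∈ S) : w (reflectCoord k 0 i) = w i := by
  simpa only [reflectCoord, zero_sub] using (hk i hi).2

lemma SymmetricAxis.walkSum_univ_eq_zero (hk : SymmetricAxis d S w k) {φ : (Fin d → ℤ) → ℝ}
    {c : ℤ} (hφ : ∀ y, φ (reflectCoord k c y) = -φ y) {x : Fin d → ℤ} (hx : x k + x k = c)
    (n : ℕ) : walkSum S w Set.univ n φ x = 0 := by
  refine self_eq_neg.1 ?_
  calc walkSum S w Set.univ n φ x
      = walkSum S w Set.univ n φ (reflectCoord k c x) := by rw [reflectCoord_eq_self hx]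
    _ = walkSum S w Set.univ n (φ ∘ reflectCoord k c) x :=
        (walkSum_preimage_comp (C := Set.univ) (ρ := (reflectCoord_involutive k 0).toPerm)
          hk.reflectCoord_mem_iff (fun _ => hk.weight_reflectCoord)
          (fun y i _ => reflectCoord_add k c y i) n).symm
    _ = walkSum S w Set.univ n (-φ) x := by rw [show φ ∘ reflectCoord k c = -φ from funext hφ]
    _ = -walkSum S w Set.univ n φ x := walkSum_univ_neg S w φ n x

lemma SymmetricAxis.walkSum_coordProd_update_add_odd (hk : SymmetricAxis d S w k)
    (Φ : Fin d → ℤ → ℝ) {δ : ℤ → ℝ} (hδ : δ.Odd) (n : ℕ) :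
    walkSum S w Set.univ n (coordProd (Function.update Φ k (Φ k + δ))) 0 =
      walkSum S w Set.univ n (coordProd Φ) 0 := by
  have hodd : walkSum S w Set.univ n (coordProd (Function.update Φ k δ)) 0 = 0 :=
    hk.walkSum_univ_eq_zero (c := 0) (coordProd_reflectCoord fun y => by
      rw [Function.update_self, zero_sub, hδ]) rfl n
  rw [coordProd_update_add, walkSum_univ_add, hodd, add_zero, Function.update_eq_self]

lemma walkSum_coordProd_add_odd (hsym : ∀ k, SymmetricAxis d S w k) (Φ : Fin d → ℤ → ℝ)
    {δ : Fin d → ℤ → ℝ} (hδ : ∀ j, (δ j).Odd) (n : ℕ) :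
    walkSum S w Set.univ n (coordProd (Φ + δ)) 0 = walkSum S w Set.univ n (coordProd Φ) 0 := by
  suffices h : ∀ A : Finset (Fin d), walkSum S w Set.univ n (coordProd (A.piecewise (Φ + δ) Φ)) 0 =
      walkSum S w Set.univ n (coordProd Φ) 0 by
    simpa only [Finset.piecewise_univ] using h univ
  intro A
  induction A using Finset.induction_on with
  | empty => rw [Finset.piecewise_empty]
  | insert k A hk ih =>
    rw [Finset.piecewise_insert, Pi.add_apply, ← Finset.piecewise_eq_of_notMem A (Φ + δ) Φ hk,
      (hsym k).walkSum_coordProd_update_add_odd _ (hδ k), ih]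

lemma walkSum_Ici_eq_walkSum_univ (hstep : ∀ i ∈ S, ∀ j, -1 ≤ i j)
    (hsym : ∀ k, SymmetricAxis d S w k) {φ : (Fin d → ℤ) → ℝ}
    (hφ : ∀ k y, φ (reflectCoord k (-2) y) = -φ y) {x : Fin d → ℤ} (hx : 0 ≤ x) (n : ℕ) :
    walkSum S w (Set.Ici 0) n φ x = walkSum S w Set.univ n φ x := by
  refine walkSum_eq_walkSum_univ (fun n x hx i hi hxi => ?_) hx n
  obtain ⟨k, hk⟩ : ∃ k, x k + i k < 0 := by
    simpa [Pi.le_def] using hxi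
  refine (hsym k).walkSum_univ_eq_zero (hφ k) ?_ n
  have hxk : 0 ≤ x k := hx k
  have hik : -1 ≤ i k := hstep i hi k
  rw [Pi.add_apply]
  omega

lemma walkWeight_eq_walkSum {φ : (Fin d → ℤ) → ℝ} (hφ : ∀ y, 0 ≤ y → φ y = 1) (n : ℕ) :
    walkWeight d S w n = walkSum S w (Set.Ici 0) n φ 0 := by
  refine Finset.sum_congr rfl fun f _ => ?_
  simp only [Set.mem_Ici, Pi.le_def, Pi.zero_apply, zero_add, Finset.sum_apply]
  refine if_ctx_congr Iff.rfl (fun h => ?_) fun _ => rfl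
  rw [hφ _ fun j => ?_, mul_one]
  simpa using h n le_rfl j

end Symmetry

section Sign

lemma sign_add_one_sub_sign (y : ℤ) :
    (y + 1).sign - y.sign = (if y = -1 then 1 else 0) + (if y = 0 then 1 else 0) := by
  obtain h | rfl | rfl | h : y < -1 ∨ y = -1 ∨ y = 0 ∨ 0 < y := by omega
  · rw [Int.sign_eq_neg_one_of_neg (by omega), Int.sign_eq_neg_one_of_neg (by omega),
      if_neg (by omega), if_neg (by omega)]
    rfl
  · rfl
  · rfl
  · rw [Int.sign_eq_one_of_pos (by omega), Int.sign_eq_one_of_pos (by omega),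
      if_neg (by omega), if_neg (by omega)]
    rfl

lemma coordProd_sign_add_one_eq_one {d : ℕ} {y : Fin d → ℤ} (hy : 0 ≤ y) :
    coordProd (fun _ z => ((z + 1).sign : ℝ)) y = 1 :=
  Finset.prod_eq_one fun j _ => by
    beta_reduce
    rw [Int.sign_eq_one_of_pos (Int.lt_add_one_of_le (hy j)), Int.cast_one]

/-- The indicator function of `{-1, 0}^d`, in product form. -/
def cornerIndicator (d : ℕ) : (Fin d → ℤ) → ℝ :=
  coordProd fun _ y => (if y = -1 then 1 else 0) + if y = 0 then 1 else 0

lemma cornerIndicator_eq_coordProd_sign (d : ℕ) :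
    cornerIndicator d =
      coordProd ((fun _ y => ((y + 1).sign : ℝ)) + fun _ y => -(y.sign : ℝ)) := by
  refine congrArg coordProd (funext₂ fun _ y => ?_)
  simp only [Pi.add_apply, ← sub_eq_add_neg]
  exact_mod_cast (sign_add_one_sub_sign y).symm

theorem walkWeight_eq_walkSum_cornerIndicator {d : ℕ} {S : Finset (Fin d → ℤ)}
    {w : (Fin d → ℤ) → ℝ} (hstep : ∀ i ∈ S, ∀ j, -1 ≤ i j) (hsym : ∀ k, SymmetricAxis d S w k)
    (n : ℕ) : walkWeight d S w n = walkSum S w Set.univ n (cornerIndicator d) 0 := by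
  have hreflect : ∀ (k : Fin d) (y : Fin d → ℤ),
      coordProd (fun _ z => ((z + 1).sign : ℝ)) (reflectCoord k (-2) y) =
        -coordProd (fun _ z => ((z + 1).sign : ℝ)) y := fun k => by
    refine coordProd_reflectCoord fun z => ?_
    rw [show -2 - z + 1 = -(z + 1) by ring, Int.sign_neg, Int.cast_neg]
  rw [walkWeight_eq_walkSum (fun _ => coordProd_sign_add_one_eq_one),
    walkSum_Ici_eq_walkSum_univ hstep hsym hreflect le_rfl, cornerIndicator_eq_coordProd_sign,
    walkSum_coordProd_add_odd hsym]
  intro _ y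
  simp only [Int.sign_neg, Int.cast_neg]

end Sign

section PowerSeries

open MvPowerSeries

section Homogeneous

variable {σ R : Type*} {p : ℕ}

lemma isWeightedHomogeneous_monomial [CommSemiring R] {v : σ → ℕ} {e : σ →₀ ℕ}
    (he : Finsupp.weight v e = p) (r : R) :
    (monomial e r).IsWeightedHomogeneous v p := by
  intro e' h
  rw [coeff_monomial, ne_eq, ite_eq_right_iff, not_forall] at h
  rw [h.1, he]

lemma isWeightedHomogeneous_sum [CommSemiring R] {v : σ → ℕ} {α : Type*} {s : Finset α}
    {F : α → MvPowerSeries σ R} (hF : ∀ a ∈ s, (F a).IsWeightedHomogeneous v p) :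
    (∑ a ∈ s, F a).IsWeightedHomogeneous v p := by
  intro e h
  rw [map_sum] at h
  obtain ⟨a, ha, hne⟩ := Finset.exists_ne_zero_of_sum_ne_zero h
  exact hF a ha hne

lemma le_weightedOrder_of_isWeightedHomogeneous [CommSemiring R] {v : σ → ℕ}
    {F : MvPowerSeries σ R} (hF : F.IsWeightedHomogeneous v p) : p ≤ F.weightedOrder v :=
  nat_le_weightedOrder v fun _ he => hF.coeff_eq_zero he.ne

lemma coeff_mul_inv_one_sub {K : Type*} [Field K] {v : σ → ℕ} {P T : MvPowerSeries σ K}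
    (hP : P.IsWeightedHomogeneous v p) (hT : T.IsWeightedHomogeneous v 1) {n : ℕ} {e : σ →₀ ℕ}
    (he : Finsupp.weight v e = p + n) : coeff e (P * (1 - T)⁻¹) = coeff e (P * T ^ n) := by
  have hconst : constantCoeff (1 - T) ≠ 0 := by
    have hT₀ : constantCoeff T = 0 := hT.coeff_eq_zero (by simp)
    simp [hT₀]
  have hexpand : P * (1 - T)⁻¹ = P + P * T * (1 - T)⁻¹ := by
    linear_combination P * MvPowerSeries.mul_inv_cancel _ hconst
  have hPT : (P * T).IsWeightedHomogeneous v (p + 1) := hP.mul hT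
  induction n generalizing P p with
  | zero =>
    have horder : (Finsupp.weight v e : ℕ∞) < (P * T * (1 - T)⁻¹).weightedOrder v :=
      calc (Finsupp.weight v e : ℕ∞) < (p + 1 : ℕ) := by rw [he]; exact_mod_cast p.lt_succ_self
        _ ≤ (P * T).weightedOrder v := le_weightedOrder_of_isWeightedHomogeneous hPT
        _ ≤ _ := le_self_add.trans (le_weightedOrder_mul v)
    rw [hexpand, map_add, coeff_eq_zero_of_lt_weightedOrder v horder, add_zero, pow_zero, mul_one]
  | succ n ih =>
    rw [hexpand, map_add, hP.coeff_eq_zero (by omega), zero_add, pow_succ', ← mul_assoc]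
    refine ih hPT (by omega) ?_ (hPT.mul hT)
    linear_combination P * T * MvPowerSeries.mul_inv_cancel _ hconst

end Homogeneous

section Monomials

variable {σ R : Type*} [CommSemiring R]

lemma prod_one_add_X_eq_sum_monomial (s : Finset σ) :
    ∏ j ∈ s, (1 + X j : MvPowerSeries σ R) =
      ∑ A ∈ s.powerset, monomial (∑ j ∈ A, Finsupp.single j 1) 1 := by
  simp only [Finset.prod_one_add, X, prod_monomial, Finset.prod_const_one]

lemma eq_sum_single_add_iff [DecidableEq σ] {s A : Finset σ} {a e : σ →₀ ℕ}
    (h : ∀ j ∉ s, e j = a j) :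
    e = ∑ j ∈ A, Finsupp.single j 1 + a ↔
      (∀ j ∈ A, e j = a j + 1) ∧ ∀ j ∈ s \ A, e j = a j := by
  have hval : ∀ j, (∑ i ∈ A, Finsupp.single i 1 : σ →₀ ℕ) j = if j ∈ A then 1 else 0 := fun j => by
    simp [Finsupp.finsetSum_apply, Finsupp.single_apply]
  simp only [Finsupp.ext_iff, Finsupp.add_apply, hval, Finset.mem_sdiff]
  constructor
  · intro he
    exact ⟨fun j hj => by rw [he, if_pos hj, add_comm], fun j hj => by
      rw [he, if_neg hj.2, zero_add]⟩
  · rintro ⟨hmem, hsdiff⟩ j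
    by_cases hj : j ∈ A
    · rw [hmem j hj, if_pos hj, add_comm]
    · rw [if_neg hj, zero_add]
      by_cases hjs : j ∈ s
      · exact hsdiff j ⟨hjs, hj⟩
      · exact h j hjs

lemma coeff_prod_one_add_X_mul_monomial {s : Finset σ} {a e : σ →₀ ℕ} (h : ∀ j ∉ s, e j = a j)
    (r : R) :
    coeff e ((∏ j ∈ s, (1 + X j)) * monomial a r) =
      r * ∏ j ∈ s, ((if e j = a j + 1 then 1 else 0) + if e j = a j then 1 else 0) := by
  rw [prod_one_add_X_eq_sum_monomial, Finset.sum_mul, map_sum, Finset.prod_add, Finset.mul_sum]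
  refine Finset.sum_congr rfl fun A _ => ?_
  simp only [monomial_mul_monomial, one_mul, coeff_monomial, Finset.prod_boole,
    eq_sum_single_add_iff h]
  rw [ite_zero_mul_ite_zero, mul_one, mul_ite, mul_one, mul_zero]

end Monomials

variable {d : ℕ}

/-- The exponent of the monomial `t * z_1^(i_1 + 1) ⋯ z_d^(i_d + 1)`, for a step `i` with all
coordinates at least `-1`; smaller coordinates are truncated. -/
def stepExponent (i : Fin d → ℤ) : Fin (d + 1) →₀ ℕ :=
  Finsupp.single (Fin.last d) 1 +
    ∑ j : Fin d, Finsupp.single (Fin.castSucc j) (i j + 1).toNat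

lemma stepExponent_last (i : Fin d → ℤ) : stepExponent i (Fin.last d) = 1 := by
  simp [stepExponent]

lemma stepExponent_castSucc {i : Fin d → ℤ} {j : Fin d} (hij : -1 ≤ i j) :
    (stepExponent i (Fin.castSucc j) : ℤ) = i j + 1 := by
  simp only [stepExponent, Finsupp.add_apply, Finsupp.finsetSum_apply, Finsupp.single_apply,
    Fin.castSucc_inj, Finset.sum_ite_eq', Finset.mem_univ, if_true, (Fin.castSucc_ne_last j).symm,
    if_false, zero_add]
  omega

variable (S : Finset (Fin d → ℤ)) (w : (Fin d → ℤ) → ℝ)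

lemma X_last_mul_zProdS :
    X (Fin.last d) * zProdS d S w = ∑ i ∈ S, monomial (stepExponent i) (w i) := by
  rw [zProdS, Finset.mul_sum]
  refine Finset.sum_congr rfl fun i _ => ?_
  simp only [X_pow_eq, prod_monomial, Finset.prod_const_one, ← monomial_zero_eq_C_apply]
  simp only [X, monomial_mul_monomial, one_mul, mul_one, zero_add, stepExponent]

lemma X_last_mul_zProdS_pow (n : ℕ) :
    (X (Fin.last d) * zProdS d S w) ^ n =
      ∑ f : Fin n → S, monomial (∑ k, stepExponent (f k : Fin d → ℤ)) (∏ k, w (f k)) := by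
  rw [X_last_mul_zProdS, ← Finset.sum_coe_sort S, Fintype.sum_pow]
  simp only [prod_monomial]

lemma prod_one_add_X_castSucc :
    ∏ j : Fin d, (1 + X (Fin.castSucc j) : MvPowerSeries (Fin (d + 1)) ℝ) =
      ∏ j ∈ univ.map Fin.castSuccEmb, (1 + X j) := by
  rw [Finset.prod_map]
  rfl

lemma coeff_diagonal_series_eq_coeff_pow (e : Fin (d + 1) →₀ ℕ) :
    coeff e ((∏ j : Fin d, (1 + X (Fin.castSucc j))) *
        (1 - X (Fin.last d) * zProdS d S w)⁻¹) =
      coeff e ((∏ j : Fin d, (1 + X (Fin.castSucc j))) *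
        (X (Fin.last d) * zProdS d S w) ^ e (Fin.last d)) := by
  refine coeff_mul_inv_one_sub (v := Pi.single (Fin.last d) 1) (p := 0) ?_ ?_ ?_
  · rw [prod_one_add_X_castSucc, prod_one_add_X_eq_sum_monomial]
    refine isWeightedHomogeneous_sum fun A hA => isWeightedHomogeneous_monomial ?_ 1
    rw [map_sum]
    refine Finset.sum_eq_zero fun j hj => ?_
    obtain ⟨i, -, rfl⟩ := Finset.mem_map.1 (Finset.mem_powerset.1 hA hj)
    simp [Finsupp.weight_single_one_apply]
  · rw [X_last_mul_zProdS]
    refine isWeightedHomogeneous_sum fun i _ => isWeightedHomogeneous_monomial ?_ (w i)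
    rw [Finsupp.weight_single_one_apply, stepExponent_last]
  · rw [Finsupp.weight_single_one_apply, zero_add]

variable {S}

theorem coeff_diagonal_series (hstep : ∀ i ∈ S, ∀ j, -1 ≤ i j) (e : Fin (d + 1) →₀ ℕ) :
    coeff e ((∏ j : Fin d, (1 + X (Fin.castSucc j))) *
        (1 - X (Fin.last d) * zProdS d S w)⁻¹) =
      walkSum S w Set.univ (e (Fin.last d)) (cornerIndicator d)
        (fun j => e (Fin.last d) - e (Fin.castSucc j)) := by
  rw [coeff_diagonal_series_eq_coeff_pow, X_last_mul_zProdS_pow, Finset.mul_sum, map_sum,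
    walkSum_univ]
  refine Finset.sum_congr rfl fun f _ => ?_
  have hlast : ∀ j ∉ univ.map (Fin.castSuccEmb (n := d)),
      e j = (∑ k, stepExponent (f k : Fin d → ℤ)) j := fun j hj => by
    obtain rfl : j = Fin.last d := by
      induction j using Fin.lastCases with
      | last => rfl
      | cast j => simp at hj
    simp [Finsupp.finsetSum_apply, stepExponent_last]
  have hcast : ∀ j : Fin d, (((∑ k, stepExponent (f k : Fin d → ℤ)) (Fin.castSucc j) : ℕ) : ℤ) =
      e (Fin.last d) + ∑ k, (f k : Fin d → ℤ) j := fun j => by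
    simp [Finsupp.finsetSum_apply, stepExponent_castSucc (hstep _ (f _).2 j),
      Finset.sum_add_distrib, add_comm]
  rw [prod_one_add_X_castSucc, coeff_prod_one_add_X_mul_monomial hlast, Finset.prod_map]
  refine congrArg _ (Finset.prod_congr rfl fun j _ => ?_)
  simp only [Fin.coe_castSuccEmb, Pi.add_apply, Finset.sum_apply]
  have := hcast j
  congr 2 <;> rw [eq_iff_iff] <;> omega

end PowerSeries

theorem highly_symmetric_diagonal_general {d : ℕ} {S : Finset (Fin d → ℤ)}
    {w : (Fin d → ℤ) → ℝ} (hstep : ∀ i ∈ S, ∀ j, -1 ≤ i j)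
    (hsym : ∀ k : Fin d, SymmetricAxis d S w k) (n : ℕ) :
    walkWeight d S w n =
      MvPowerSeries.coeff (R := ℝ) (Finsupp.equivFunOnFinite.symm fun _ : Fin (d + 1) => n)
        ((∏ j : Fin d, (1 + MvPowerSeries.X (Fin.castSucc j))) *
          (1 - MvPowerSeries.X (Fin.last d) * zProdS d S w)⁻¹) := by
  rw [walkWeight_eq_walkSum_cornerIndicator hstep hsym, coeff_diagonal_series w hstep]
  simp only [Finsupp.equivFunOnFinite_symm_apply_apply, sub_self]
  rfl

/-- Diagonal representation for highly symmetric models: `s_n` is the coefficient of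
`z_1^n ⋯ z_d^n t^n` in the power series expansion of
`(1+z_1)⋯(1+z_d) / (1 - t (z_1⋯z_d) S(z))`. -/
theorem highly_symmetric_diagonal
    (d : ℕ) (hd : 1 ≤ d) (S : Finset (Fin d → ℤ)) (w : (Fin d → ℤ) → ℝ)
    (hstep : ∀ i ∈ S, (∀ j, i j = -1 ∨ i j = 0 ∨ i j = 1) ∧ i ≠ 0)
    (hw : ∀ i ∈ S, 0 < w i)
    (hsym : ∀ k : Fin d, SymmetricAxis d S w k)
    (hfwd : ∀ k : Fin d, ∃ i ∈ S, i k = 1)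
    (hbwd : ∀ k : Fin d, ∃ i ∈ S, i k = -1)
    (n : ℕ) :
    walkWeight d S w n =
      MvPowerSeries.coeff (R := ℝ) (Finsupp.equivFunOnFinite.symm fun _ : Fin (d + 1) => n)
        ((∏ j : Fin d, (1 + MvPowerSeries.X (Fin.castSucc j))) *
          (1 - MvPowerSeries.X (Fin.last d) * zProdS d S w)⁻¹) := by
  exact highly_symmetric_diagonal_general
    (fun i hi j => by have := (hstep i hi).1 j; omega) hsym n

end
end

section
/- (Lemma 1, localization) With the zero-drift mostly symmetric setup and running assumptions ε = n^{-α}, δ = n^{-β} where 1/2 < α < 2β, α + β > 1, and 1/3 < β < 1/2, for any fixed 0 < γ < 1 one has s_n = (2πi)^{-(d+1)} ∫_{N × C^in} [G(z,t)/H(z,t)] · dz dt / (z_1···z_d t)^{n+1} + O(S(1)^n e_n), where e_n → 0 faster than any fixed power of n (i.e., n^m e_n → 0 for every m). -/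
open Finset Filter MeasureTheory
open scoped Classical Real

noncomputable section

namespace ZeroDrift

variable (d : ℕ) (S : Finset (Fin (d + 1) → ℤ)) (w : (Fin (d + 1) → ℤ) → ℝ)

/-- `S(1)`, the total weight of the step set. -/
def S1 : ℝ := ∑ i ∈ S, w i

/-- `A(ẑ)`: the Laurent polynomial collecting steps with last coordinate `-1`. -/
def AC (z : Fin (d + 1) → ℂ) : ℂ :=
  ∑ i ∈ S.filter fun i => i (Fin.last d) = -1,
    (w i : ℂ) * ∏ j : Fin d, z (Fin.castSucc j) ^ (i (Fin.castSucc j))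

/-- `B(ẑ)`: the Laurent polynomial collecting steps with last coordinate `1`. -/
def BC (z : Fin (d + 1) → ℂ) : ℂ :=
  ∑ i ∈ S.filter fun i => i (Fin.last d) = 1,
    (w i : ℂ) * ∏ j : Fin d, z (Fin.castSucc j) ^ (i (Fin.castSucc j))

/-- `Q(ẑ)`: the Laurent polynomial collecting steps with last coordinate `0`. -/
def QC (z : Fin (d + 1) → ℂ) : ℂ :=
  ∑ i ∈ S.filter fun i => i (Fin.last d) = 0,
    (w i : ℂ) * ∏ j : Fin d, z (Fin.castSucc j) ^ (i (Fin.castSucc j))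

/-- The characteristic Laurent polynomial `S(z)` evaluated at `z : ℂ^{d+1}`. -/
def SC (z : Fin (d + 1) → ℂ) : ℂ :=
  ∑ i ∈ S, (w i : ℂ) * ∏ j : Fin (d + 1), z j ^ (i j)

/-- `S̄(z) = S(z_1,…,z_{d},1/z_{d+1})` evaluated at `z : ℂ^{d+1}`. -/
def SbarC (z : Fin (d + 1) → ℂ) : ℂ :=
  ∑ i ∈ S, (w i : ℂ) *
    (∏ j : Fin d, z (Fin.castSucc j) ^ (i (Fin.castSucc j))) *
    z (Fin.last d) ^ (-(i (Fin.last d)))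

/-- The numerator `G(z,t)` of the diagonal representation. -/
def GC (z : Fin (d + 1) → ℂ) (t : ℂ) : ℂ :=
  (∏ j : Fin d, (1 + z (Fin.castSucc j))) *
    (1 - t * (∏ j, z j) * (QC d S w z + 2 * z (Fin.last d) * AC d S w z))

/-- The denominator `H(z,t) = H_1 H_2 H_3` of the diagonal representation. -/
def HC (z : Fin (d + 1) → ℂ) (t : ℂ) : ℂ :=
  (1 - z (Fin.last d)) * (1 - t * (∏ j, z j) * SbarC d S w z) *
    (1 - t * (∏ j, z j) * (QC d S w z + z (Fin.last d) * AC d S w z))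

/-- The point of `ℂ^{d+1}` with coordinates `i^{m_j}` encoded by `m : Fin (d+1) → Fin 4`. -/
def wOf (m : Fin (d + 1) → Fin 4) : Fin (d + 1) → ℂ :=
  fun j => Complex.I ^ (m j : ℕ)

/-- The (indices of the) finite set `Γ` of possible contributing points: `w_j ∈ {±1}` for
`j ≤ d`, `w_{d+1} ∈ {±1,±i}`, and `|1/(w_1⋯w_{d+1} S(w))| = 1/S(1)`. -/
def GammaIdx : Finset (Fin (d + 1) → Fin 4) :=
  Finset.univ.filter fun m =>
    (∀ j : Fin d, m (Fin.castSucc j) = 0 ∨ m (Fin.castSucc j) = 2) ∧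
    ‖(1 / ((∏ j, wOf d m j) * SC d S w (wOf d m)) : ℂ)‖ = 1 / S1 d S w

/-- The argument (angle) of the point encoded by `m` in coordinate `j`. -/
def argOf (m : Fin (d + 1) → Fin 4) (j : Fin (d + 1)) : ℝ := (m j : ℕ) * π / 2

/-- The box of angles parametrizing the product of arcs `N_w` for `w = wOf m`. -/
def box (m : Fin (d + 1) → Fin 4) (δ : ℝ) : Set (Fin (d + 1) → ℝ) :=
  Set.univ.pi fun j => Set.Ioo (argOf d m j - δ) (argOf d m j + δ)

/-- The parametrization of the torus `|z_j| = 1` (`j ≤ d`), `|z_{d+1}| = 1 - ε`. -/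
def zOf (ε : ℝ) (θ : Fin (d + 1) → ℝ) : Fin (d + 1) → ℂ :=
  fun j => (if j = Fin.last d then (1 - ε : ℂ) else 1) * Complex.exp (Complex.I * θ j)

/-- Angles parametrizing `N = ⋃_{w ∈ Γ} N_w`. -/
def Nparam (δ : ℝ) : Set (Fin (d + 1) → ℝ) := ⋃ m ∈ GammaIdx d S w, box d m δ

/-- The contour integral `(2πi)^{-(d+2)} ∫_{N × C} G/H · dz dt/(z_1⋯z_{d+1}t)^{n+1}`,
parametrized by angles, where `C` is the circle `|t| = r`. -/
def fullIntegral (n : ℕ) (ε δ r : ℝ) : ℂ :=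
  (((2 * π) ^ (d + 2) : ℝ))⁻¹ •
    ∫ θ in Nparam d S w δ,
      ∫ φ in Set.Ioo 0 (2 * π),
        GC d S w (zOf d ε θ) ((r : ℂ) * Complex.exp (Complex.I * φ)) /
            HC d S w (zOf d ε θ) ((r : ℂ) * Complex.exp (Complex.I * φ)) *
          (((∏ j, zOf d ε θ j) * ((r : ℂ) * Complex.exp (Complex.I * φ))) ^ n)⁻¹

/-- The residue integrand
`[(1+z_1)⋯(1+z_d)/(B(ẑ) z_1⋯z_{d+1})]·[(B(ẑ) - z_{d+1}^2 A(ẑ))/(1-z_{d+1})]·S̄(z)^n`,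
parametrized by angles, including the Jacobian factors `i z_j` of `dz_j`. -/
def resIntegrand (n : ℕ) (ε : ℝ) (θ : Fin (d + 1) → ℝ) : ℂ :=
  ((∏ j : Fin d, (1 + zOf d ε θ (Fin.castSucc j))) /
      (BC d S w (zOf d ε θ) * ∏ j, zOf d ε θ j)) *
    ((BC d S w (zOf d ε θ) - zOf d ε θ (Fin.last d) ^ 2 * AC d S w (zOf d ε θ)) /
      (1 - zOf d ε θ (Fin.last d))) *
    SbarC d S w (zOf d ε θ) ^ n *
    ∏ j, Complex.I * zOf d ε θ j

/-- The contour integral `∫_{N_w} (residue integrand) dz` over the product of arcs `N_w`,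
`w = wOf m`, parametrized by angles. -/
def resIntegral (n : ℕ) (ε δ : ℝ) (m : Fin (d + 1) → Fin 4) : ℂ :=
  ∫ θ in box d m δ, resIntegrand d S w n ε θ

end ZeroDrift

/-!
By the symmetry of `S` in the first coordinates, reflection sums in those coordinates turn walks
confined to the positive orthant into walks killed at `0` in the last coordinate only, with weights
`A(ẑ)`, `Q(ẑ)`, `B(ẑ)`. The latter are counted by the antisymmetric eigenvectors of their recursion,
integrated over `|z_d| = 1 - ε`; up to a term holomorphic in `|z_d| < 1` that vanishes at `z_d = 0`,
the resulting integrand is the residue in `t` of `G / H`, so that the integral over the whole torus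
is exactly `s_n`.

Off `N` that residue is exponentially small. If all monomials of `S̄` were nearly aligned at a point
of the torus, comparing a step with its reflections would place each symmetric angle near a multiple
of `π`; comparing a step up with a step down then places the last angle near a multiple of `π / 2`;
rounding gives an exact alignment, that is, a point of `Γ`. Hence off `N` two of the monomials are
out of phase by at least a multiple of `δ`, which lowers `|S̄|²` by a multiple of `δ²`. The drift
condition makes the loss incurred from `|z_d| = 1 - ε` of order `ε²`, which is negligible against
`δ²`, and `exp (-l n δ²) = exp (-l n ^ (1 - 2 β))` decays faster than any power of `n`.
-/

namespace ZeroDrift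

section CoefficientExtraction

variable {r : ℝ} {p : ℂ} {F : ℂ → ℂ}

/-- The power series coefficient `[tⁿ] F`, as a Cauchy integral over the circle `|t| = r`. -/
def circleCoeff (r : ℝ) (F : ℂ → ℂ) (n : ℕ) : ℂ :=
  Real.circleAverage (fun t => (t ^ n)⁻¹ * F t) 0 r

theorem circleCoeff_zero (hr : 0 < r) (hF : DifferentiableOn ℂ F (Metric.closedBall 0 r)) :
    circleCoeff r F 0 = F 0 := by
  have hcl : DiffContOnCl ℂ F (Metric.ball 0 |r|) := by
    rw [abs_of_pos hr]
    apply DifferentiableOn.diffContOnCl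
    rwa [closure_ball _ hr.ne']
  simpa [circleCoeff] using hcl.circleAverage

theorem circleAverage_inv_pow (hr : 0 < r) (n : ℕ) :
    Real.circleAverage (fun t : ℂ => (t ^ n)⁻¹) 0 r = if n = 0 then 1 else 0 := by
  rcases n with _ | n
  · simp [Real.circleAverage_const]
  rw [Real.circleAverage_eq_circleIntegral hr.ne']
  have h : (fun t : ℂ => (t - 0)⁻¹ • (t ^ (n + 1))⁻¹)
      = fun t : ℂ => (t - 0) ^ (-(n + 2 : ℕ) : ℤ) := by
    funext t
    simp only [sub_zero, smul_eq_mul, zpow_neg, zpow_natCast, ← mul_inv]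
    ring
  rw [h, circleIntegral.integral_sub_zpow_of_ne (by push_cast; omega)]
  simp

theorem circleIntegrable_inv_pow_mul (hr : 0 < r)
    (hF : ContinuousOn F (Metric.closedBall 0 r)) (n : ℕ) :
    CircleIntegrable (fun t => (t ^ n)⁻¹ * F t) 0 r := by
  refine ContinuousOn.circleIntegrable hr.le (ContinuousOn.mul ?_
    (hF.mono Metric.sphere_subset_closedBall))
  refine (continuousOn_id.pow n).inv₀ fun t ht => pow_ne_zero n ?_
  exact norm_pos_iff.mp ((mem_sphere_zero_iff_norm.mp ht) ▸ hr)

theorem circleCoeff_one_sub_mul_succ (hr : 0 < r) (b : ℂ) (n : ℕ) :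
    circleCoeff r (fun t => 1 - t * b) (n + 1) = if n = 0 then -b else 0 := by
  have hsphere : circleCoeff r (fun t => 1 - t * b) (n + 1)
      = Real.circleAverage (fun t => (t ^ (n + 1))⁻¹ - b • (t ^ n)⁻¹) 0 r := by
    refine Real.circleAverage_congr_sphere fun t ht => ?_
    rw [abs_of_pos hr, mem_sphere_zero_iff_norm] at ht
    have ht0 : t ≠ 0 := norm_pos_iff.mp (ht ▸ hr)
    simp only [smul_eq_mul]
    field_simp
    ring
  have hint (k : ℕ) : CircleIntegrable (fun t => (t ^ k)⁻¹) 0 r := by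
    simpa only [mul_one] using
      circleIntegrable_inv_pow_mul (F := fun _ => 1) hr continuousOn_const k
  rw [hsphere, Real.circleAverage_fun_sub (hint _) ((hint _).const_fun_smul),
    Real.circleAverage_fun_smul, circleAverage_inv_pow hr, circleAverage_inv_pow hr]
  split_ifs <;> simp_all

theorem one_sub_mul_ne_zero {t : ℂ} (hp : r * ‖p‖ < 1) (ht : ‖t‖ ≤ r) : 1 - t * p ≠ 0 := by
  intro h
  have hnorm : ‖t‖ * ‖p‖ = 1 := by rw [← norm_mul, ← sub_eq_zero.mp h, norm_one]
  linarith [mul_le_mul_of_nonneg_right ht (norm_nonneg p)]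

theorem differentiableOn_inv_one_sub_mul (hp : r * ‖p‖ < 1)
    (hF : DifferentiableOn ℂ F (Metric.closedBall 0 r)) :
    DifferentiableOn ℂ (fun t => (1 - t * p)⁻¹ * F t) (Metric.closedBall 0 r) := by
  refine DifferentiableOn.mul (DifferentiableOn.inv (by fun_prop) fun t ht => ?_) hF
  exact one_sub_mul_ne_zero hp (mem_closedBall_zero_iff.mp ht)

theorem circleCoeff_inv_one_sub_mul_succ (hr : 0 < r) (hp : r * ‖p‖ < 1)
    (hF : DifferentiableOn ℂ F (Metric.closedBall 0 r)) (n : ℕ) :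
    circleCoeff r (fun t => (1 - t * p)⁻¹ * F t) (n + 1)
      = circleCoeff r F (n + 1) + p * circleCoeff r (fun t => (1 - t * p)⁻¹ * F t) n := by
  have hsphere : circleCoeff r (fun t => (1 - t * p)⁻¹ * F t) (n + 1)
      = Real.circleAverage (fun t => (t ^ (n + 1))⁻¹ * F t
        + p • ((t ^ n)⁻¹ * ((1 - t * p)⁻¹ * F t))) 0 r := by
    refine Real.circleAverage_congr_sphere fun t ht => ?_
    rw [abs_of_pos hr, mem_sphere_zero_iff_norm] at ht
    have ht0 : t ≠ 0 := norm_pos_iff.mp (ht ▸ hr)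
    have h1 := one_sub_mul_ne_zero hp ht.le
    simp only [smul_eq_mul]
    field_simp
    ring
  have hG := (differentiableOn_inv_one_sub_mul hp hF).continuousOn
  rw [hsphere, Real.circleAverage_fun_add
    (circleIntegrable_inv_pow_mul hr hF.continuousOn _)
    (circleIntegrable_inv_pow_mul hr hG _).const_fun_smul, Real.circleAverage_fun_smul]
  rfl

theorem circleCoeff_inv_one_sub_mul (hr : 0 < r) (hp : r * ‖p‖ < 1)
    (hF : DifferentiableOn ℂ F (Metric.closedBall 0 r)) (n : ℕ) :
    circleCoeff r (fun t => (1 - t * p)⁻¹ * F t) n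
      = ∑ i ∈ range (n + 1), circleCoeff r F i * p ^ (n - i) := by
  induction n with
  | zero =>
    simp [circleCoeff_zero hr hF, circleCoeff_zero hr (differentiableOn_inv_one_sub_mul hp hF)]
  | succ n ih =>
    rw [circleCoeff_inv_one_sub_mul_succ hr hp hF, ih, sum_range_succ _ (n + 1), mul_sum, add_comm]
    congr 1
    · refine sum_congr rfl fun i hi => ?_
      rw [Nat.succ_sub (mem_range_succ_iff.mp hi), pow_succ]
      ring
    · simp

/-- The coefficient of `tⁿ` in `(1 - t (U + a)) / ((1 - t V) (1 - t U))`. -/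
def twoPoleCoeff (V U a : ℂ) (n : ℕ) : ℂ := V ^ n - a * ∑ i ∈ range n, U ^ i * V ^ (n - 1 - i)

theorem mul_twoPoleCoeff (c V U a : ℂ) (n : ℕ) :
    twoPoleCoeff (c * V) (c * U) (c * a) n = c ^ n * twoPoleCoeff V U a n := by
  simp only [twoPoleCoeff, mul_sub, mul_sum, mul_pow]
  congr 1
  refine sum_congr rfl fun i hi => ?_
  obtain ⟨k, rfl⟩ := Nat.exists_eq_add_of_lt (mem_range.mp hi)
  rw [show i + k + 1 - 1 - i = k by omega]
  ring

theorem circleCoeff_two_poles (hr : 0 < r) {V U : ℂ} (hV : r * ‖V‖ < 1) (hU : r * ‖U‖ < 1)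
    (a : ℂ) (n : ℕ) :
    circleCoeff r (fun t => (1 - t * V)⁻¹ * ((1 - t * U)⁻¹ * (1 - t * (U + a)))) n
      = twoPoleCoeff V U a n := by
  have hnum : DifferentiableOn ℂ (fun t => 1 - t * (U + a)) (Metric.closedBall 0 r) := by
    fun_prop
  have hone := differentiableOn_inv_one_sub_mul hU hnum
  have hsucc (i : ℕ) :
      circleCoeff r (fun t => (1 - t * U)⁻¹ * (1 - t * (U + a))) (i + 1) = -(a * U ^ i) := by
    rw [circleCoeff_inv_one_sub_mul hr hU hnum, sum_range_succ', sum_range_succ']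
    simp [circleCoeff_zero hr hnum, circleCoeff_one_sub_mul_succ hr]
    ring
  rw [circleCoeff_inv_one_sub_mul hr hV hone, sum_range_succ', circleCoeff_zero hr hone]
  simp only [hsucc, twoPoleCoeff, mul_sum]
  simp only [neg_mul, sum_neg_distrib, zero_mul, sub_zero, inv_one, one_mul, Nat.sub_sub, mul_assoc,
    add_comm 1, tsub_zero]
  ring

theorem circleAverage_two_poles (hr : 0 < r) {c V U : ℂ} (hc : c ≠ 0) (hV : r * ‖c * V‖ < 1)
    (hU : r * ‖c * U‖ < 1) (a : ℂ) (n : ℕ) :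
    Real.circleAverage (fun t => (1 - t * c * (U + a)) /
        ((1 - t * c * V) * (1 - t * c * U)) * ((c * t) ^ n)⁻¹) 0 r = twoPoleCoeff V U a n := by
  have hcoeff : (fun t => (1 - t * c * (U + a)) / ((1 - t * c * V) * (1 - t * c * U)) *
        ((c * t) ^ n)⁻¹) = fun t => (c ^ n)⁻¹ • ((t ^ n)⁻¹ * ((1 - t * (c * V))⁻¹ *
        ((1 - t * (c * U))⁻¹ * (1 - t * (c * U + c * a))))) := by
    funext t
    simp only [div_eq_mul_inv, mul_inv, mul_pow, smul_eq_mul, mul_assoc, mul_add]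
    ring
  have h := circleCoeff_two_poles hr hV hU (c * a) n
  rw [circleCoeff] at h
  rw [hcoeff, Real.circleAverage_fun_smul, h, mul_twoPoleCoeff, smul_eq_mul,
    inv_mul_cancel_left₀ (pow_ne_zero n hc)]

end CoefficientExtraction

section KilledWalk

/-- Total weight of the walks of length `n` on `ℤ` which start at `m`, stay positive, and take the
steps `-1`, `0`, `1` with weights `a`, `q`, `b`. -/
def killedWeight (a q b : ℂ) : ℕ → ℕ → ℂ
  | _, 0 => 0
  | 0, _ + 1 => 1
  | n + 1, m + 1 => a * killedWeight a q b n m + q * killedWeight a q b n (m + 1)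
      + b * killedWeight a q b n (m + 2)

theorem killedWeight_zero_right (a q b : ℂ) (n : ℕ) : killedWeight a q b n 0 = 0 := by
  cases n <;> rfl

theorem killedWeight_one_of_up_eq_zero (a q : ℂ) (n : ℕ) : killedWeight a q 0 n 1 = q ^ n := by
  induction n with
  | zero => rfl
  | succ n ih => simp [killedWeight, killedWeight_zero_right, ih, pow_succ']

theorem continuous_killedWeight {X : Type*} [TopologicalSpace X] {a q b : X → ℂ}
    (ha : Continuous a) (hq : Continuous q) (hb : Continuous b) (n m : ℕ) :
    Continuous fun x => killedWeight (a x) (q x) (b x) n m := by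
  induction n generalizing m with
  | zero => cases m <;> exact continuous_const
  | succ n ih =>
    cases m with
    | zero => exact continuous_const
    | succ m => exact ((ha.mul (ih m)).add (hq.mul (ih (m + 1)))).add (hb.mul (ih (m + 2)))

/-- The antisymmetric combination `x⁻ᵐ - cᵐ xᵐ` of powers, which vanishes for `m = 0` and, for
`c = a / b`, is an eigenvector of the recursion of `killedWeight` with eigenvalue
`q + x a + b / x`. -/
def reflectedPow (c : ℂ) (m : ℕ) (x : ℂ) : ℂ := (x ^ m)⁻¹ - c ^ m * x ^ m

theorem reflectedPow_recursion {a q b x : ℂ} (hb : b ≠ 0) (hx : x ≠ 0) (m : ℕ) :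
    a * reflectedPow (a / b) m x + q * reflectedPow (a / b) (m + 1) x
        + b * reflectedPow (a / b) (m + 2) x
      = reflectedPow (a / b) (m + 1) x * (q + x * a + b / x) := by
  simp only [reflectedPow, div_pow]
  field_simp
  ring

variable {ρ : ℝ}

theorem differentiableOn_inv_one_sub {F : ℂ → ℂ} (hρ1 : ρ < 1)
    (hF : DifferentiableOn ℂ F (Metric.closedBall 0 ρ)) :
    DifferentiableOn ℂ (fun x => (1 - x)⁻¹ * F x) (Metric.closedBall 0 ρ) := by
  simpa using differentiableOn_inv_one_sub_mul (p := 1) (by simpa using hρ1) hF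

variable (hρ0 : 0 < ρ) (hρ1 : ρ < 1)
include hρ0 hρ1

theorem ne_zero_and_one_sub_ne_zero_of_mem_sphere {x : ℂ} (hx : x ∈ Metric.sphere 0 ρ) :
    x ≠ 0 ∧ 1 - x ≠ 0 := by
  rw [mem_sphere_zero_iff_norm] at hx
  refine ⟨norm_pos_iff.mp (hx ▸ hρ0), ?_⟩
  simpa using one_sub_mul_ne_zero (p := 1) (by simpa using hρ1) hx.le

theorem circleAverage_inv_one_sub_mul {F : ℂ → ℂ}
    (hF : DifferentiableOn ℂ F (Metric.closedBall 0 ρ)) :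
    Real.circleAverage (fun x => (1 - x)⁻¹ * F x) 0 ρ = F 0 := by
  simpa [circleCoeff] using circleCoeff_zero hρ0 (differentiableOn_inv_one_sub hρ1 hF)

theorem circleIntegrable_inv_one_sub_mul {F : ℂ → ℂ}
    (hF : DifferentiableOn ℂ F (Metric.closedBall 0 ρ)) :
    CircleIntegrable (fun x => (1 - x)⁻¹ * F x) 0 ρ := by
  simpa using circleIntegrable_inv_pow_mul hρ0
    (differentiableOn_inv_one_sub hρ1 hF).continuousOn 0

theorem circleIntegrable_reflectedPow_mul_pow (a q b c : ℂ) (n m : ℕ) :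
    CircleIntegrable (fun x => x / (1 - x) * reflectedPow c m x * (q + x * a + b / x) ^ n) 0 ρ := by
  refine ContinuousOn.circleIntegrable hρ0.le fun x hx => ContinuousAt.continuousWithinAt ?_
  obtain ⟨hx0, hx1⟩ := ne_zero_and_one_sub_ne_zero_of_mem_sphere hρ0 hρ1 hx
  unfold reflectedPow
  fun_prop (disch := first | assumption | exact pow_ne_zero _ ‹_›)

theorem circleAverage_reflectedPow (c : ℂ) (m : ℕ) :
    Real.circleAverage (fun x => x / (1 - x) * reflectedPow c (m + 1) x) 0 ρ = 1 := by
  have hsphere : Real.circleAverage (fun x => x / (1 - x) * reflectedPow c (m + 1) x) 0 ρ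
      = Real.circleAverage (fun x => (x ^ m)⁻¹ * ((1 - x)⁻¹ * 1)
        - (1 - x)⁻¹ * (c ^ (m + 1) * x ^ (m + 2))) 0 ρ := by
    refine Real.circleAverage_congr_sphere fun x hx => ?_
    rw [abs_of_pos hρ0] at hx
    obtain ⟨hx0, hx1⟩ := ne_zero_and_one_sub_ne_zero_of_mem_sphere hρ0 hρ1 hx
    simp only [reflectedPow]
    field_simp
    ring
  have hone := differentiableOn_inv_one_sub hρ1 (F := fun _ => 1) (differentiableOn_const 1)
  have hpow : DifferentiableOn ℂ (fun x => c ^ (m + 1) * x ^ (m + 2)) (Metric.closedBall 0 ρ) := by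
    fun_prop
  have hcoeff : Real.circleAverage (fun x : ℂ => (x ^ m)⁻¹ * ((1 - x)⁻¹ * 1)) 0 ρ = 1 := by
    have h := circleCoeff_inv_one_sub_mul (p := 1) hρ0 (by simpa using hρ1)
      (differentiableOn_const (1 : ℂ)) m
    simpa [circleCoeff, circleAverage_inv_pow hρ0] using h
  rw [hsphere, Real.circleAverage_fun_sub (circleIntegrable_inv_pow_mul hρ0 hone.continuousOn m)
    (circleIntegrable_inv_one_sub_mul hρ0 hρ1 hpow), hcoeff,
    circleAverage_inv_one_sub_mul hρ0 hρ1 hpow]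
  simp

theorem circleAverage_reflectedPow_mul_pow {b : ℂ} (hb : b ≠ 0) (a q : ℂ) (n m : ℕ) :
    Real.circleAverage (fun x => x / (1 - x) * reflectedPow (a / b) m x
      * (q + x * a + b / x) ^ n) 0 ρ = killedWeight a q b n m := by
  have hint := circleIntegrable_reflectedPow_mul_pow hρ0 hρ1 a q b (a / b)
  induction n generalizing m with
  | zero =>
    cases m with
    | zero => simp [reflectedPow, killedWeight, Real.circleAverage_const]
    | succ m => simpa [killedWeight] using circleAverage_reflectedPow hρ0 hρ1 (a / b) m
  | succ n ih =>
    cases m with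
    | zero => simp [reflectedPow, killedWeight, Real.circleAverage_const]
    | succ m =>
      rw [killedWeight, ← ih m, ← ih (m + 1), ← ih (m + 2)]
      simp only [← smul_eq_mul (a := a), ← smul_eq_mul (a := q), ← smul_eq_mul (a := b),
        ← Real.circleAverage_fun_smul]
      rw [← Real.circleAverage_fun_add (hint n m).const_fun_smul (hint n (m + 1)).const_fun_smul,
        ← Real.circleAverage_fun_add
          ((hint n m).const_fun_smul.fun_add (hint n (m + 1)).const_fun_smul)
          (hint n (m + 2)).const_fun_smul]
      refine Real.circleAverage_congr_sphere fun x hx => ?_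
      rw [abs_of_pos hρ0] at hx
      have hx0 := (ne_zero_and_one_sub_ne_zero_of_mem_sphere hρ0 hρ1 hx).1
      have hrec := reflectedPow_recursion (a := a) (q := q) hb hx0 m
      simp only [smul_eq_mul, pow_succ]
      linear_combination -(x / (1 - x)) * (q + x * a + b / x) ^ n * hrec

theorem circleAverage_twoPoleCoeff (a q b : ℂ) (n : ℕ) :
    Real.circleAverage (fun x => (1 - x)⁻¹ *
      twoPoleCoeff (q + x * a + b / x) (q + x * a) (x * a) n) 0 ρ = killedWeight a q b n 1 := by
  rcases eq_or_ne b 0 with rfl | hb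
  · have hF : DifferentiableOn ℂ (fun x : ℂ => twoPoleCoeff (q + x * a) (q + x * a) (x * a) n)
        (Metric.closedBall 0 ρ) := by
      unfold twoPoleCoeff
      fun_prop
    simpa [twoPoleCoeff, killedWeight_one_of_up_eq_zero] using
      circleAverage_inv_one_sub_mul hρ0 hρ1 hF
  have hF : DifferentiableOn ℂ (fun x => x ^ 2 * (a / b) * (q + x * a) ^ n)
      (Metric.closedBall 0 ρ) := by
    fun_prop
  have hsphere : Real.circleAverage (fun x => (1 - x)⁻¹ *
        twoPoleCoeff (q + x * a + b / x) (q + x * a) (x * a) n) 0 ρ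
      = Real.circleAverage (fun x => x / (1 - x) * reflectedPow (a / b) 1 x
        * (q + x * a + b / x) ^ n + (1 - x)⁻¹ * (x ^ 2 * (a / b) * (q + x * a) ^ n)) 0 ρ := by
    refine Real.circleAverage_congr_sphere fun x hx => ?_
    rw [abs_of_pos hρ0] at hx
    obtain ⟨hx0, hx1⟩ := ne_zero_and_one_sub_ne_zero_of_mem_sphere hρ0 hρ1 hx
    have hgeom := geom_sum₂_mul (q + x * a) (q + x * a + b / x) n
    have hsum : x * a * ∑ i ∈ range n, (q + x * a) ^ i * (q + x * a + b / x) ^ (n - 1 - i)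
        = x ^ 2 * (a / b) * ((q + x * a + b / x) ^ n - (q + x * a) ^ n) := by
      rw [sub_add_cancel_left] at hgeom
      rw [← neg_sub, ← hgeom]
      field_simp
    simp only [twoPoleCoeff, hsum, reflectedPow]
    field_simp
    ring
  rw [hsphere, Real.circleAverage_fun_add
      (circleIntegrable_reflectedPow_mul_pow hρ0 hρ1 a q b (a / b) n 1)
      (circleIntegrable_inv_one_sub_mul hρ0 hρ1 hF), circleAverage_inv_one_sub_mul hρ0 hρ1 hF,
    circleAverage_reflectedPow_mul_pow hρ0 hρ1 hb]
  simp

end KilledWalk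

section Reflection

/-- `1 + z + ⋯ + z ^ m + z⁻¹ + ⋯ + z ^ (-(m - 1))`, that is
`(z ^ (1 - m) - z ^ (m + 1)) / (1 - z)`: the orbit sum of the reflection principle in a coordinate
starting at `m`, divided by `1 - z`. -/
def reflSum (z : ℂ) (m : ℕ) : ℂ := ∑ k ∈ range m, (z ^ (k + 1) + z⁻¹ ^ k)

theorem reflSum_zero (z : ℂ) : reflSum z 0 = 0 := rfl

theorem reflSum_one (z : ℂ) : reflSum z 1 = 1 + z := by simp [reflSum, add_comm]

theorem reflSum_succ (z : ℂ) (m : ℕ) : reflSum z (m + 1) = reflSum z m + (z ^ (m + 1) + z⁻¹ ^ m) :=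
  sum_range_succ _ _

theorem reflSum_add {z : ℂ} (hz : z ≠ 0) (m : ℕ) :
    reflSum z (m + 2) + reflSum z m = (z + z⁻¹) * reflSum z (m + 1) := by
  induction m with
  | zero =>
    simp only [reflSum_succ, reflSum_zero]
    field_simp
    ring
  | succ m ih =>
    linear_combination reflSum_succ z (m + 2) + reflSum_succ z m + ih
      - (z + z⁻¹) * reflSum_succ z (m + 1)
      + (-z⁻¹ ^ m - z ^ (m + 1)) * mul_inv_cancel₀ hz

theorem zpow_add_zpow_neg_mul_reflSum {z : ℂ} (hz : z ≠ 0) {y e : ℤ} (hy : 1 ≤ y)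
    (he : e = -1 ∨ e = 0 ∨ e = 1) :
    (z ^ e + z ^ (-e)) * reflSum z y.toNat
      = reflSum z (y + e).toNat + reflSum z (y + -e).toNat := by
  obtain ⟨m, rfl⟩ : ∃ m : ℕ, y = m + 1 := ⟨(y - 1).toNat, by omega⟩
  have h := reflSum_add hz m
  have e0 : ((m : ℤ) + 1).toNat = m + 1 := by omega
  have e1 : ((m : ℤ) + 1 + 1).toNat = m + 2 := by omega
  have e2 : ((m : ℤ) + 1 + -1).toNat = m := by omega
  rcases he with rfl | rfl | rfl
  · simp only [neg_neg, e0, e1, e2, zpow_neg, zpow_one]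
    linear_combination -h
  · simp only [neg_zero, add_zero, e0, zpow_zero]
    ring
  · simp only [e0, e1, e2, zpow_neg, zpow_one]
    linear_combination -h

theorem circleAverage_pow_succ (k : ℕ) :
    Real.circleAverage (fun z : ℂ => z ^ (k + 1)) 0 1 = 0 := by
  have h := circleCoeff_zero one_pos (F := fun z => z ^ (k + 1)) (by fun_prop)
  simpa [circleCoeff] using h

theorem circleAverage_reflSum_succ (m : ℕ) :
    Real.circleAverage (fun z => reflSum z (m + 1)) 0 1 = 1 := by
  have hpow (k : ℕ) : CircleIntegrable (fun z : ℂ => z ^ (k + 1)) 0 1 :=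
    ContinuousOn.circleIntegrable zero_le_one (by fun_prop)
  have hinv (k : ℕ) : CircleIntegrable (fun z : ℂ => z⁻¹ ^ k) 0 1 := by
    simpa using circleIntegrable_inv_pow_mul (F := fun _ => 1) one_pos continuousOn_const k
  have hterm (k : ℕ) : Real.circleAverage (fun z : ℂ => z ^ (k + 1) + z⁻¹ ^ k) 0 1
      = if k = 0 then 1 else 0 := by
    rw [Real.circleAverage_fun_add (hpow k) (hinv k), circleAverage_pow_succ, zero_add]
    simpa only [inv_pow] using circleAverage_inv_pow one_pos k
  simp only [reflSum]
  rw [Real.circleAverage_fun_sum (f := fun k z => z ^ (k + 1) + z⁻¹ ^ k)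
    fun k _ => (hpow k).add (hinv k), sum_congr rfl fun k _ => hterm k]
  simp

variable {n : ℕ} {S : Finset (Fin n → ℤ)} {w : (Fin n → ℤ) → ℝ} {k : Fin n}

theorem sum_comp_update_neg (hk : SymmetricAxis n S w k) (f : (Fin n → ℤ) → ℂ) :
    ∑ i ∈ S, (w i : ℂ) * f (Function.update i k (-(i k))) = ∑ i ∈ S, (w i : ℂ) * f i := by
  refine sum_nbij' (fun i => Function.update i k (-(i k)))
    (fun i => Function.update i k (-(i k))) (fun i hi => (hk i hi).1) (fun i hi => (hk i hi).1)
    (fun i _ => by simp) (fun i _ => by simp) fun i hi => ?_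
  rw [(hk i hi).2]

theorem sum_prod_update_of_symmetrized_eq (hk : SymmetricAxis n S w k) (h : Fin n → ℤ → ℂ)
    {f : ℤ → ℂ} (hf : ∀ i ∈ S, f (i k) + f (-(i k)) = h k (i k) + h k (-(i k))) :
    ∑ i ∈ S, (w i : ℂ) * ∏ j, Function.update h k f j (i j)
      = ∑ i ∈ S, (w i : ℂ) * ∏ j, h j (i j) := by
  have hsplit (g : ℤ → ℂ) (i : Fin n → ℤ) : ∏ j, Function.update h k g j (i j)
      = g (i k) * ∏ j ∈ univ.erase k, h j (i j) := by
    rw [← mul_prod_erase univ _ (mem_univ k), Function.update_self]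
    congr 1
    exact prod_congr rfl fun j hj => by rw [Function.update_of_ne (ne_of_mem_erase hj)]
  have hsymm (g : ℤ → ℂ) : 2 * ∑ i ∈ S, (w i : ℂ) * ∏ j, Function.update h k g j (i j)
      = ∑ i ∈ S, (w i : ℂ) * ((g (i k) + g (-(i k))) * ∏ j ∈ univ.erase k, h j (i j)) := by
    rw [two_mul]
    nth_rewrite 2 [← sum_comp_update_neg hk]
    simp only [hsplit, Function.update_self, ← sum_add_distrib, add_mul, mul_add]
    refine sum_congr rfl fun i _ => ?_
    congr 3
    exact prod_congr rfl fun j hj => by rw [Function.update_of_ne (ne_of_mem_erase hj)]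
  rw [← mul_right_inj' (two_ne_zero' ℂ), hsymm]
  nth_rewrite 2 [← Function.update_eq_self k h]
  rw [hsymm]
  exact sum_congr rfl fun i hi => by rw [hf i hi]

theorem sum_prod_eq_of_symmetrized_eq {f g : Fin n → ℤ → ℂ}
    (h : ∀ k, f k = g k ∨ SymmetricAxis n S w k ∧
      ∀ i ∈ S, f k (i k) + f k (-(i k)) = g k (i k) + g k (-(i k))) :
    ∑ i ∈ S, (w i : ℂ) * ∏ j, f j (i j) = ∑ i ∈ S, (w i : ℂ) * ∏ j, g j (i j) := by
  suffices hT : ∀ T : Finset (Fin n), ∑ i ∈ S, (w i : ℂ) * ∏ j, T.piecewise f g j (i j)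
      = ∑ i ∈ S, (w i : ℂ) * ∏ j, g j (i j) by
    simpa only [piecewise_univ] using hT univ
  intro T
  induction T using Finset.induction_on with
  | empty => simp only [piecewise_empty]
  | insert k T hkT ih =>
    have hgk : T.piecewise f g k = g k := piecewise_eq_of_notMem _ _ _ hkT
    rw [piecewise_insert, ← ih]
    rcases h k with hfg | ⟨hk, hsymm⟩
    · rw [hfg, ← hgk, Function.update_eq_self]
    · exact sum_prod_update_of_symmetrized_eq hk _ (by simpa only [hgk] using hsymm)

end Reflection

section Walks

variable {D : ℕ}

/-- The walk with steps `f` starting at `y` keeps all coordinates positive. -/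
def StaysPositive {n : ℕ} (y : Fin D → ℤ) (f : Fin n → Fin D → ℤ) : Prop :=
  ∀ m ≤ n, ∀ j, 1 ≤ y j + ∑ k : Fin n with k.val < m, f k j

theorem staysPositive_cons {n : ℕ} {y i : Fin D → ℤ} {f : Fin n → Fin D → ℤ} :
    StaysPositive y (Fin.cons i f : Fin (n + 1) → Fin D → ℤ)
      ↔ (∀ j, 1 ≤ y j) ∧ StaysPositive (y + i) f := by
  have hsum (m : ℕ) (j : Fin D) :
      ∑ k : Fin (n + 1) with k.val < m + 1, (Fin.cons i f : Fin (n + 1) → Fin D → ℤ) k j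
        = i j + ∑ k : Fin n with k.val < m, f k j := by
    rw [sum_filter, Fin.sum_univ_succ, sum_filter]
    simp
  constructor
  · intro h
    refine ⟨fun j => by simpa using h 0 (Nat.zero_le _) j, fun m hm j => ?_⟩
    simpa only [hsum, Pi.add_apply, add_assoc] using h (m + 1) (Nat.succ_le_succ hm) j
  · rintro ⟨h0, h⟩ m hm j
    cases m with
    | zero => simpa using h0 j
    | succ m =>
      simpa only [hsum, Pi.add_apply, add_assoc] using h m (Nat.le_of_succ_le_succ hm) j

/-- Total weight of the walks of length `n` with steps in `S` which start at `y` and keep all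
coordinates positive. -/
def positiveWalkWeight (S : Finset (Fin D → ℤ)) (w : (Fin D → ℤ) → ℝ) : ℕ → (Fin D → ℤ) → ℝ
  | 0, y => if ∀ j, 1 ≤ y j then 1 else 0
  | n + 1, y => if ∀ j, 1 ≤ y j then ∑ i ∈ S, w i * positiveWalkWeight S w n (y + i) else 0

variable {S : Finset (Fin D → ℤ)} {w : (Fin D → ℤ) → ℝ}

theorem positiveWalkWeight_of_not_pos {y : Fin D → ℤ} (hy : ¬∀ j, 1 ≤ y j) (n : ℕ) :
    positiveWalkWeight S w n y = 0 := by
  cases n <;> exact if_neg hy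

theorem sum_staysPositive (n : ℕ) (y : Fin D → ℤ) :
    (∑ f : Fin n → {i // i ∈ S},
      if StaysPositive y (fun k => (f k : Fin D → ℤ)) then ∏ k, w (f k) else 0)
      = positiveWalkWeight S w n y := by
  induction n generalizing y with
  | zero => simp [positiveWalkWeight, StaysPositive]
  | succ n ih =>
    have hcons (i : {i // i ∈ S}) (f : Fin n → {i // i ∈ S}) :
        (fun k => ((Fin.cons i f : Fin (n + 1) → {i // i ∈ S}) k : Fin D → ℤ))
          = Fin.cons (i : Fin D → ℤ) fun k => (f k : Fin D → ℤ) := by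
      funext k
      cases k using Fin.cases <;> rfl
    rw [← (Fin.consEquiv fun _ : Fin (n + 1) => {i // i ∈ S}).sum_comp, Fintype.sum_prod_type,
      positiveWalkWeight]
    simp only [Fin.consEquiv_apply, hcons, staysPositive_cons]
    split_ifs with hy
    · rw [← sum_coe_sort S]
      refine sum_congr rfl fun i _ => ?_
      simp only [hy, implies_true, true_and, ← ih, mul_sum, mul_ite, mul_zero,
        Fin.prod_univ_succ, Fin.cons_zero, Fin.cons_succ]
    · simp [hy]

theorem walkWeight_eq (n : ℕ) : walkWeight D S w n = positiveWalkWeight S w n 1 := by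
  simp only [← sum_staysPositive, walkWeight, StaysPositive, Pi.one_apply,
    le_add_iff_nonneg_right]

end Walks

section TorusIntegrals

/-- A full turn of angles, starting at `-π / 4` so that the angles `0`, `π / 2`, `π`, `3 π / 2` are
interior. -/
def arc : Set ℝ := Set.Ioc (-(π / 4)) (-(π / 4) + 2 * π)

/-- A fundamental domain of the torus of angles. -/
def cell (d : ℕ) : Set (Fin (d + 1) → ℝ) := Set.univ.pi fun _ => arc

theorem setIntegral_arc (F : ℂ → ℂ) (ρ : ℝ) :
    ∫ s in arc, F (ρ * Complex.exp (Complex.I * s)) = (2 * π) • Real.circleAverage F 0 ρ := by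
  have h0 : (2 * π) ≠ 0 := by positivity
  rw [arc, Real.circleAverage_eq_integral_add (-(π / 4)), smul_smul, mul_inv_cancel₀ h0, one_smul,
    intervalIntegral.integral_comp_add_right (fun s => F (circleMap 0 ρ s)) (-(π / 4)),
    intervalIntegral.integral_of_le (by linarith [Real.pi_pos])]
  simp [circleMap, mul_comm, add_comm]

theorem setIntegral_Ioo_circle (F : ℂ → ℂ) (r : ℝ) :
    ∫ s in Set.Ioo 0 (2 * π), F (r * Complex.exp (Complex.I * s))
      = (2 * π) • Real.circleAverage F 0 r := by
  have h0 : (2 * π) ≠ 0 := by positivity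
  rw [Real.circleAverage_def, smul_smul, mul_inv_cancel₀ h0, one_smul,
    intervalIntegral.integral_of_le (by positivity), integral_Ioc_eq_integral_Ioo]
  simp [circleMap, mul_comm]

theorem restrict_cell (d : ℕ) : (volume : Measure (Fin (d + 1) → ℝ)).restrict (cell d)
    = Measure.pi fun _ => volume.restrict arc := by
  rw [cell, volume_pi, Measure.restrict_pi_pi]

theorem volume_real_cell (d : ℕ) : volume.real (cell d) = (2 * π) ^ (d + 1) := by
  simp only [Measure.real, cell, arc]
  rw [Real.volume_pi_Ioc, ENNReal.toReal_prod]
  simp [Real.pi_pos.le]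

theorem setIntegral_cell_prod (d : ℕ) (f : Fin (d + 1) → ℝ → ℂ) :
    ∫ θ in cell d, ∏ j, f j (θ j) = ∏ j, ∫ s in arc, f j s := by
  rw [restrict_cell]
  exact integral_fintype_prod_eq_prod f

variable {d : ℕ} {f g : (Fin (d + 1) → ℝ) → ℂ}

theorem integrableOn_cell (hf : Continuous f) : IntegrableOn f (cell d) := by
  have hK : IsCompact (Set.univ.pi fun _ : Fin (d + 1) =>
      Set.Icc (-(π / 4)) (-(π / 4) + 2 * π)) := isCompact_univ_pi fun _ => isCompact_Icc
  exact (hf.continuousOn.integrableOn_compact hK).mono_set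
    (Set.pi_mono fun _ _ => Set.Ioc_subset_Icc_self)

theorem setIntegral_cell_eq_iterated (hf : Continuous f) :
    ∫ θ in cell d, f θ = ∫ η : Fin d → ℝ, (∫ s in arc, f (Fin.snoc η s))
      ∂(Measure.pi fun _ => volume.restrict arc) := by
  have hint : Integrable f (Measure.pi fun _ : Fin (d + 1) => volume.restrict arc) := by
    rw [← restrict_cell]
    exact integrableOn_cell hf
  have hsplit := (measurePreserving_piFinSuccAbove (fun _ : Fin (d + 1) =>
      (volume : Measure ℝ).restrict arc) (Fin.last d)).symm
  have hsnoc (s : ℝ) (η : Fin d → ℝ) : (MeasurableEquiv.piFinSuccAbove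
      (fun _ : Fin (d + 1) => ℝ) (Fin.last d)).symm (s, η) = Fin.snoc η s :=
    Fin.insertNth_last' s η
  rw [restrict_cell, ← hsplit.integral_comp', integral_prod_symm]
  · simp only [hsnoc]
  · exact hsplit.integrable_comp_of_integrable hint

theorem setIntegral_cell_congr (hf : Continuous f) (hg : Continuous g)
    (h : ∀ η : Fin d → ℝ, ∫ s in arc, f (Fin.snoc η s) = ∫ s in arc, g (Fin.snoc η s)) :
    ∫ θ in cell d, f θ = ∫ θ in cell d, g θ := by
  simp only [setIntegral_cell_eq_iterated hf, setIntegral_cell_eq_iterated hg, h]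

end TorusIntegrals

section TorusPoints

variable {d : ℕ} {ε : ℝ}

theorem zOf_castSucc (ε : ℝ) (θ : Fin (d + 1) → ℝ) (j : Fin d) :
    zOf d ε θ (Fin.castSucc j) = Complex.exp (Complex.I * θ (Fin.castSucc j)) := by
  simp [zOf, (Fin.castSucc_lt_last j).ne]

theorem zOf_last (ε : ℝ) (θ : Fin (d + 1) → ℝ) :
    zOf d ε θ (Fin.last d) = (1 - ε : ℝ) * Complex.exp (Complex.I * θ (Fin.last d)) := by
  simp [zOf]

theorem norm_zOf_castSucc (ε : ℝ) (θ : Fin (d + 1) → ℝ) (j : Fin d) :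
    ‖zOf d ε θ (Fin.castSucc j)‖ = 1 := by
  rw [zOf_castSucc, mul_comm, Complex.norm_exp_ofReal_mul_I]

theorem zOf_castSucc_ne_zero (ε : ℝ) (θ : Fin (d + 1) → ℝ) (j : Fin d) :
    zOf d ε θ (Fin.castSucc j) ≠ 0 := by
  rw [zOf_castSucc]
  exact Complex.exp_ne_zero _

theorem norm_zOf_last (hε1 : ε < 1) (θ : Fin (d + 1) → ℝ) :
    ‖zOf d ε θ (Fin.last d)‖ = 1 - ε := by
  rw [zOf_last, norm_mul, mul_comm Complex.I, Complex.norm_exp_ofReal_mul_I, mul_one,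
    Complex.norm_real, Real.norm_of_nonneg (by linarith)]

theorem zOf_last_ne_zero (hε1 : ε < 1) (θ : Fin (d + 1) → ℝ) : zOf d ε θ (Fin.last d) ≠ 0 := by
  rw [← norm_pos_iff, norm_zOf_last hε1]
  linarith

theorem prod_zOf_ne_zero (hε1 : ε < 1) (θ : Fin (d + 1) → ℝ) : ∏ j, zOf d ε θ j ≠ 0 := by
  rw [Fin.prod_univ_castSucc]
  exact mul_ne_zero (prod_ne_zero_iff.mpr fun j _ => zOf_castSucc_ne_zero ε θ j)
    (zOf_last_ne_zero hε1 θ)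

theorem one_sub_zOf_last_ne_zero (hε0 : 0 < ε) (hε1 : ε < 1) (θ : Fin (d + 1) → ℝ) :
    1 - zOf d ε θ (Fin.last d) ≠ 0 := by
  intro h
  have hnorm := norm_zOf_last hε1 θ
  rw [← sub_eq_zero.mp h, norm_one] at hnorm
  linarith

theorem continuous_zOf (ε : ℝ) (j : Fin (d + 1)) : Continuous fun θ => zOf d ε θ j := by
  unfold zOf
  fun_prop

end TorusPoints

section ExactFormula

/-- All steps of `S` lie in `{-1, 0, 1} ^ D`. -/
def SmallSteps {D : ℕ} (S : Finset (Fin D → ℤ)) : Prop :=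
  ∀ i ∈ S, ∀ j, i j = -1 ∨ i j = 0 ∨ i j = 1

variable {d : ℕ} {S : Finset (Fin (d + 1) → ℤ)} {w : (Fin (d + 1) → ℤ) → ℝ} {ε : ℝ}

theorem sum_mul_last (hS : SmallSteps S) (z : Fin (d + 1) → ℂ) (g : ℤ → ℂ) :
    ∑ i ∈ S, (w i : ℂ) * (∏ j : Fin d, z (Fin.castSucc j) ^ (i (Fin.castSucc j)))
        * g (i (Fin.last d))
      = AC d S w z * g (-1) + QC d S w z * g 0 + BC d S w z * g 1 := by
  simp only [AC, QC, BC, sum_filter, sum_mul, ← sum_add_distrib]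
  refine sum_congr rfl fun i hi => ?_
  rcases hS i hi (Fin.last d) with h | h | h <;> simp [h]

theorem SbarC_eq (hS : SmallSteps S) (z : Fin (d + 1) → ℂ) :
    SbarC d S w z = QC d S w z + z (Fin.last d) * AC d S w z
      + BC d S w z / z (Fin.last d) := by
  rw [SbarC, sum_mul_last hS z fun e => z (Fin.last d) ^ (-e)]
  simp only [neg_neg, zpow_one, neg_zero, zpow_zero, zpow_neg]
  ring

theorem sum_mul_prod_reflSum_mul (hS : SmallSteps S)
    (hsym : ∀ k : Fin d, SymmetricAxis (d + 1) S w (Fin.castSucc k))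
    {z : Fin (d + 1) → ℂ} (hz : ∀ j : Fin d, z (Fin.castSucc j) ≠ 0) {y : Fin (d + 1) → ℤ}
    (hy : ∀ j, 1 ≤ y j) (g : ℤ → ℂ) :
    ∑ i ∈ S, (w i : ℂ) * ((∏ j : Fin d,
        reflSum (z (Fin.castSucc j)) (y (Fin.castSucc j) + i (Fin.castSucc j)).toNat)
          * g (i (Fin.last d)))
      = (∏ j : Fin d, reflSum (z (Fin.castSucc j)) (y (Fin.castSucc j)).toNat)
        * (AC d S w z * g (-1) + QC d S w z * g 0 + BC d S w z * g 1) := by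
  have hexchange := sum_prod_eq_of_symmetrized_eq (S := S) (w := w)
    (f := Fin.lastCases g fun j e =>
      reflSum (z (Fin.castSucc j)) (y (Fin.castSucc j) + e).toNat)
    (g := Fin.lastCases g fun j e =>
      z (Fin.castSucc j) ^ e * reflSum (z (Fin.castSucc j)) (y (Fin.castSucc j)).toNat)
    fun k => by
      refine Fin.lastCases (Or.inl (by simp only [Fin.lastCases_last]))
        (fun j => Or.inr ⟨hsym j, fun i hi => ?_⟩) k
      simp only [Fin.lastCases_castSucc]
      rw [← zpow_add_zpow_neg_mul_reflSum (hz j) (hy _) (hS i hi _), add_mul]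
  simp only [Fin.prod_univ_castSucc, Fin.lastCases_castSucc, Fin.lastCases_last,
    prod_mul_distrib] at hexchange
  rw [hexchange, ← sum_mul_last hS, mul_sum]
  exact sum_congr rfl fun i _ => by ring

theorem continuous_hatSum (ε : ℝ) (T : Finset (Fin (d + 1) → ℤ)) :
    Continuous fun θ => ∑ i ∈ T, (w i : ℂ) *
      ∏ j : Fin d, zOf d ε θ (Fin.castSucc j) ^ (i (Fin.castSucc j)) :=
  continuous_finsetSum _ fun _ _ => continuous_const.mul <| continuous_finsetProd _ fun _ _ =>
    (continuous_zOf ε _).zpow₀ _ fun θ => Or.inl (zOf_castSucc_ne_zero ε θ _)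

theorem continuous_AC (ε : ℝ) : Continuous fun θ => AC d S w (zOf d ε θ) := continuous_hatSum ε _

theorem continuous_QC (ε : ℝ) : Continuous fun θ => QC d S w (zOf d ε θ) := continuous_hatSum ε _

theorem continuous_BC (ε : ℝ) : Continuous fun θ => BC d S w (zOf d ε θ) := continuous_hatSum ε _

theorem continuous_SbarC (hS : SmallSteps S) (hε1 : ε < 1) :
    Continuous fun θ => SbarC d S w (zOf d ε θ) := by
  simp only [SbarC_eq hS]
  exact ((continuous_QC ε).add ((continuous_zOf ε _).mul (continuous_AC ε))).add
    ((continuous_BC ε).div (continuous_zOf ε _) (zOf_last_ne_zero hε1))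

/-- The integrand of the orbit sum representation of `positiveWalkWeight`: reflection sums in the
symmetric coordinates, and a one-dimensional walk with step weights `A(ẑ)`, `Q(ẑ)`, `B(ẑ)` in the
last one. -/
def orbitKernel (d : ℕ) (S : Finset (Fin (d + 1) → ℤ)) (w : (Fin (d + 1) → ℤ) → ℝ) (n : ℕ)
    (y : Fin (d + 1) → ℤ) (z : Fin (d + 1) → ℂ) : ℂ :=
  (∏ j : Fin d, reflSum (z (Fin.castSucc j)) (y (Fin.castSucc j)).toNat) *
    killedWeight (AC d S w z) (QC d S w z) (BC d S w z) n (y (Fin.last d)).toNat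

theorem continuous_orbitKernel (ε : ℝ) (n : ℕ) (y : Fin (d + 1) → ℤ) :
    Continuous fun θ => orbitKernel d S w n y (zOf d ε θ) := by
  refine (continuous_finsetProd _ fun j _ => continuous_finsetSum _ fun k _ => ?_).mul
    (continuous_killedWeight (continuous_AC ε) (continuous_QC ε) (continuous_BC ε) _ _)
  exact ((continuous_zOf ε _).pow _).add
    (((continuous_zOf ε _).inv₀ fun θ => zOf_castSucc_ne_zero ε θ j).pow _)

theorem orbitKernel_of_not_pos {y : Fin (d + 1) → ℤ} (hy : ¬∀ j, 1 ≤ y j) (n : ℕ)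
    (z : Fin (d + 1) → ℂ) : orbitKernel d S w n y z = 0 := by
  push Not at hy
  obtain ⟨j, hj⟩ := hy
  have hj0 : (y j).toNat = 0 := by omega
  induction j using Fin.lastCases with
  | last => rw [orbitKernel, hj0, killedWeight_zero_right, mul_zero]
  | cast j => rw [orbitKernel, prod_eq_zero (mem_univ j) (by rw [hj0, reflSum_zero]), zero_mul]

theorem orbitKernel_succ (hS : SmallSteps S)
    (hsym : ∀ k : Fin d, SymmetricAxis (d + 1) S w (Fin.castSucc k))
    {z : Fin (d + 1) → ℂ} (hz : ∀ j : Fin d, z (Fin.castSucc j) ≠ 0) {y : Fin (d + 1) → ℤ}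
    (hy : ∀ j, 1 ≤ y j) (n : ℕ) :
    orbitKernel d S w (n + 1) y z = ∑ i ∈ S, (w i : ℂ) * orbitKernel d S w n (y + i) z := by
  obtain ⟨m, hm⟩ : ∃ m : ℕ, y (Fin.last d) = m + 1 :=
    ⟨(y (Fin.last d) - 1).toNat, by have := hy (Fin.last d); omega⟩
  have hm0 : ((m : ℤ) + 1).toNat = m + 1 := by omega
  have hm1 : ((m : ℤ) + 1 + -1).toNat = m := by omega
  have hm2 : ((m : ℤ) + 1 + 1).toNat = m + 2 := by omega
  simp only [orbitKernel, Pi.add_apply]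
  rw [sum_mul_prod_reflSum_mul hS hsym hz hy fun e => killedWeight (AC d S w z) (QC d S w z)
    (BC d S w z) n (y (Fin.last d) + e).toNat]
  simp only [hm, add_zero, hm0, hm1, hm2, killedWeight]

theorem setIntegral_orbitKernel_zero (ε : ℝ) {y : Fin (d + 1) → ℤ} (hy : ∀ j, 1 ≤ y j) :
    ∫ θ in cell d, orbitKernel d S w 0 y (zOf d ε θ) = (2 * π) ^ (d + 1) := by
  obtain ⟨m, hm⟩ : ∃ m : Fin (d + 1) → ℕ, ∀ j, (y j).toNat = m j + 1 :=
    ⟨fun j => (y j).toNat - 1, fun j => by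
      change (y j).toNat = (y j).toNat - 1 + 1
      have := hy j
      omega⟩
  have hprod (θ : Fin (d + 1) → ℝ) : orbitKernel d S w 0 y (zOf d ε θ)
      = ∏ j, Fin.lastCases (motive := fun _ => ℝ → ℂ) (fun _ => 1) (fun j s =>
        reflSum ((1 : ℝ) * Complex.exp (Complex.I * s)) (m (Fin.castSucc j) + 1)) j (θ j) := by
    simp [orbitKernel, hm, killedWeight, Fin.prod_univ_castSucc, zOf_castSucc]
  have hrefl (m : ℕ) : ∫ s : ℝ in arc, reflSum ((1 : ℝ) * Complex.exp (Complex.I * s)) (m + 1)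
      = 2 * π := by
    rw [setIntegral_arc (fun z => reflSum z (m + 1)), circleAverage_reflSum_succ]
    simp
  have hone : ∫ _ in arc, (1 : ℂ) = 2 * π := by
    simpa [Real.circleAverage_const] using setIntegral_arc (fun _ => 1) 1
  simp only [hprod]
  rw [setIntegral_cell_prod, Fin.prod_univ_castSucc]
  simp only [Fin.lastCases_castSucc, Fin.lastCases_last, hrefl, hone, prod_const, card_univ,
    Fintype.card_fin, pow_succ]

theorem setIntegral_orbitKernel (hS : SmallSteps S)
    (hsym : ∀ k : Fin d, SymmetricAxis (d + 1) S w (Fin.castSucc k)) (ε : ℝ) (n : ℕ)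
    (y : Fin (d + 1) → ℤ) :
    ∫ θ in cell d, orbitKernel d S w n y (zOf d ε θ)
      = (2 * π) ^ (d + 1) * positiveWalkWeight S w n y := by
  induction n generalizing y with
  | zero =>
    by_cases hy : ∀ j, 1 ≤ y j
    · simp [setIntegral_orbitKernel_zero ε hy, positiveWalkWeight, hy]
    · simp [orbitKernel_of_not_pos hy, positiveWalkWeight_of_not_pos hy]
  | succ n ih =>
    by_cases hy : ∀ j, 1 ≤ y j
    · simp only [orbitKernel_succ hS hsym (zOf_castSucc_ne_zero ε _) hy]
      rw [integral_finsetSum _ fun i _ =>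
        (integrableOn_cell (continuous_orbitKernel ε n (y + i))).const_mul _]
      simp only [integral_const_mul, ih, positiveWalkWeight, hy, implies_true, if_true]
      push_cast
      rw [mul_sum]
      exact sum_congr rfl fun i _ => by ring
    · simp [orbitKernel_of_not_pos hy, positiveWalkWeight_of_not_pos hy]

end ExactFormula

section ResidueKernel

variable {d : ℕ} {S : Finset (Fin (d + 1) → ℤ)} {w : (Fin (d + 1) → ℤ) → ℝ} {ε : ℝ}

/-- `(2 π i)⁻¹ ∫ G(z, t) / H(z, t) dt / (z_1 ⋯ z_{d+1})^n t^{n+1}` over a small circle, in closed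
form. -/
def residueKernel (d : ℕ) (S : Finset (Fin (d + 1) → ℤ)) (w : (Fin (d + 1) → ℤ) → ℝ) (n : ℕ)
    (z : Fin (d + 1) → ℂ) : ℂ :=
  (∏ j : Fin d, (1 + z (Fin.castSucc j))) / (1 - z (Fin.last d)) *
    twoPoleCoeff (SbarC d S w z) (QC d S w z + z (Fin.last d) * AC d S w z)
      (z (Fin.last d) * AC d S w z) n

theorem circleAverage_GC_div_HC {r : ℝ} (hr : 0 < r) {z : Fin (d + 1) → ℂ} (hz : ∏ j, z j ≠ 0)
    (hV : r * ‖(∏ j, z j) * SbarC d S w z‖ < 1)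
    (hU : r * ‖(∏ j, z j) * (QC d S w z + z (Fin.last d) * AC d S w z)‖ < 1) (n : ℕ) :
    Real.circleAverage (fun t => GC d S w z t / HC d S w z t * (((∏ j, z j) * t) ^ n)⁻¹) 0 r
      = residueKernel d S w n z := by
  rw [residueKernel, ← circleAverage_two_poles hr hz hV hU, ← smul_eq_mul,
    ← Real.circleAverage_fun_smul]
  congr 1
  funext t
  rw [GC, HC, smul_eq_mul, ← mul_assoc, mul_assoc (1 - z (Fin.last d)), mul_div_mul_comm]
  ring

theorem continuous_residueKernel (hS : SmallSteps S) (hε0 : 0 < ε) (hε1 : ε < 1) (n : ℕ) :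
    Continuous fun θ => residueKernel d S w n (zOf d ε θ) := by
  have hz (j : Fin (d + 1)) := continuous_zOf ε j
  have hA := continuous_AC (S := S) (w := w) ε
  have hQ := continuous_QC (S := S) (w := w) ε
  have hV := continuous_SbarC (w := w) hS hε1
  unfold residueKernel twoPoleCoeff
  exact ((continuous_finsetProd _ fun j _ => continuous_const.add (hz _)).div
    (continuous_const.sub (hz _)) (one_sub_zOf_last_ne_zero hε0 hε1)).mul (by fun_prop)

theorem setIntegral_arc_residueKernel (hS : SmallSteps S) (hε0 : 0 < ε) (hε1 : ε < 1) (n : ℕ)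
    (η : Fin d → ℝ) :
    ∫ s in arc, residueKernel d S w n (zOf d ε (Fin.snoc η s))
      = ∫ s in arc, orbitKernel d S w n 1 (zOf d ε (Fin.snoc η s)) := by
  obtain ⟨a, ha⟩ : ∃ a, ∀ s, AC d S w (zOf d ε (Fin.snoc η s)) = a :=
    ⟨_, fun s => by simp only [AC, zOf_castSucc, Fin.snoc_castSucc]; rfl⟩
  obtain ⟨q, hq⟩ : ∃ q, ∀ s, QC d S w (zOf d ε (Fin.snoc η s)) = q :=
    ⟨_, fun s => by simp only [QC, zOf_castSucc, Fin.snoc_castSucc]; rfl⟩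
  obtain ⟨b, hb⟩ : ∃ b, ∀ s, BC d S w (zOf d ε (Fin.snoc η s)) = b :=
    ⟨_, fun s => by simp only [BC, zOf_castSucc, Fin.snoc_castSucc]; rfl⟩
  let P := ∏ j : Fin d, (1 + Complex.exp (Complex.I * η j))
  calc _ = (2 * π) • Real.circleAverage (fun x => P • ((1 - x)⁻¹ *
          twoPoleCoeff (q + x * a + b / x) (q + x * a) (x * a) n)) 0 (1 - ε) := by
        rw [← setIntegral_arc]
        refine integral_congr_ae (.of_forall fun s => ?_)
        simp only [residueKernel, SbarC_eq hS, ha, hq, hb, zOf_castSucc, zOf_last,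
          Fin.snoc_castSucc, Fin.snoc_last, div_eq_mul_inv, smul_eq_mul, P]
        ring
    _ = (2 * π) • Real.circleAverage (fun _ => P * killedWeight a q b n 1) 0 1 := by
        rw [Real.circleAverage_fun_smul, Real.circleAverage_const, smul_eq_mul,
          circleAverage_twoPoleCoeff (by linarith) (by linarith)]
    _ = _ := by
        rw [← setIntegral_arc]
        simp [orbitKernel, reflSum_one, ha, hq, hb, zOf_castSucc, P]

theorem setIntegral_residueKernel (hS : SmallSteps S)
    (hsym : ∀ k : Fin d, SymmetricAxis (d + 1) S w (Fin.castSucc k)) (hε0 : 0 < ε) (hε1 : ε < 1)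
    (n : ℕ) :
    ∫ θ in cell d, residueKernel d S w n (zOf d ε θ)
      = (2 * π) ^ (d + 1) * walkWeight (d + 1) S w n := by
  rw [setIntegral_cell_congr (continuous_residueKernel hS hε0 hε1 n)
    (continuous_orbitKernel ε n 1) (setIntegral_arc_residueKernel hS hε0 hε1 n),
    setIntegral_orbitKernel hS hsym, walkWeight_eq]

end ResidueKernel

section Bounds

variable {d : ℕ} {S : Finset (Fin (d + 1) → ℤ)} {w : (Fin (d + 1) → ℤ) → ℝ} {ε : ℝ}

/-- Total weight of the steps with last coordinate `e`; for `e = -1, 0, 1` these are `A(1)`,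
`Q(1)`, `B(1)`. -/
def layerWeight (S : Finset (Fin (d + 1) → ℤ)) (w : (Fin (d + 1) → ℤ) → ℝ) (e : ℤ) : ℝ :=
  ∑ i ∈ S.filter fun i => i (Fin.last d) = e, w i

theorem layerWeight_nonneg (hw : ∀ i ∈ S, 0 ≤ w i) (e : ℤ) : 0 ≤ layerWeight S w e :=
  sum_nonneg fun i hi => hw i (mem_filter.mp hi).1

theorem layerWeight_pos (hw : ∀ i ∈ S, 0 < w i) {e : ℤ} (he : ∃ i ∈ S, i (Fin.last d) = e) :
    0 < layerWeight S w e := by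
  obtain ⟨i, hi, hie⟩ := he
  exact sum_pos (fun i hi => hw i (mem_filter.mp hi).1) ⟨i, mem_filter.mpr ⟨hi, hie⟩⟩

theorem sum_mul_last_real (hS : SmallSteps S) (g : ℤ → ℝ) :
    ∑ i ∈ S, w i * g (i (Fin.last d))
      = layerWeight S w (-1) * g (-1) + layerWeight S w 0 * g 0 + layerWeight S w 1 * g 1 := by
  simp only [layerWeight, sum_filter, sum_mul, ← sum_add_distrib]
  refine sum_congr rfl fun i hi => ?_
  rcases hS i hi (Fin.last d) with h | h | h <;> simp [h]

theorem S1_eq (hS : SmallSteps S) :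
    S1 d S w = layerWeight S w (-1) + layerWeight S w 0 + layerWeight S w 1 := by
  simpa [S1] using sum_mul_last_real (w := w) hS fun _ => 1

theorem norm_hatSum_le (hw : ∀ i ∈ S, 0 ≤ w i) {z : Fin (d + 1) → ℂ}
    (hz : ∀ j : Fin d, ‖z (Fin.castSucc j)‖ = 1) (e : ℤ) :
    ‖∑ i ∈ S.filter fun i => i (Fin.last d) = e,
      (w i : ℂ) * ∏ j : Fin d, z (Fin.castSucc j) ^ (i (Fin.castSucc j))‖
      ≤ layerWeight S w e := by
  refine norm_sum_le_of_le _ fun i hi => ?_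
  rw [norm_mul, norm_prod, Complex.norm_real, Real.norm_of_nonneg (hw i (mem_filter.mp hi).1)]
  simp [norm_zpow, hz]

theorem norm_AC_le (hw : ∀ i ∈ S, 0 ≤ w i) (ε : ℝ) (θ : Fin (d + 1) → ℝ) :
    ‖AC d S w (zOf d ε θ)‖ ≤ layerWeight S w (-1) :=
  norm_hatSum_le hw (norm_zOf_castSucc ε θ) _

theorem norm_QC_le (hw : ∀ i ∈ S, 0 ≤ w i) (ε : ℝ) (θ : Fin (d + 1) → ℝ) :
    ‖QC d S w (zOf d ε θ)‖ ≤ layerWeight S w 0 :=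
  norm_hatSum_le hw (norm_zOf_castSucc ε θ) _

theorem norm_BC_le (hw : ∀ i ∈ S, 0 ≤ w i) (ε : ℝ) (θ : Fin (d + 1) → ℝ) :
    ‖BC d S w (zOf d ε θ)‖ ≤ layerWeight S w 1 :=
  norm_hatSum_le hw (norm_zOf_castSucc ε θ) _

theorem norm_last_mul_AC_le (hw : ∀ i ∈ S, 0 ≤ w i) (hε0 : 0 ≤ ε) (hε1 : ε < 1)
    (θ : Fin (d + 1) → ℝ) :
    ‖zOf d ε θ (Fin.last d) * AC d S w (zOf d ε θ)‖ ≤ layerWeight S w (-1) := by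
  rw [norm_mul, norm_zOf_last hε1]
  exact (mul_le_of_le_one_left (norm_nonneg _) (by linarith)).trans (norm_AC_le hw ε θ)

theorem norm_QC_add_last_mul_AC_le (hw : ∀ i ∈ S, 0 ≤ w i) (hε0 : 0 ≤ ε) (hε1 : ε < 1)
    (θ : Fin (d + 1) → ℝ) :
    ‖QC d S w (zOf d ε θ) + zOf d ε θ (Fin.last d) * AC d S w (zOf d ε θ)‖
      ≤ layerWeight S w 0 + layerWeight S w (-1) :=
  (norm_add_le _ _).trans (add_le_add (norm_QC_le hw ε θ) (norm_last_mul_AC_le hw hε0 hε1 θ))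

theorem norm_prod_zOf (hε1 : ε < 1) (θ : Fin (d + 1) → ℝ) : ‖∏ j, zOf d ε θ j‖ = 1 - ε := by
  rw [Fin.prod_univ_castSucc, norm_mul, norm_prod, norm_zOf_last hε1]
  simp [norm_zOf_castSucc]

theorem norm_prod_mul_SbarC_le (hS : SmallSteps S) (hw : ∀ i ∈ S, 0 ≤ w i) (hε0 : 0 ≤ ε)
    (hε1 : ε < 1) (θ : Fin (d + 1) → ℝ) :
    ‖(∏ j, zOf d ε θ j) * SbarC d S w (zOf d ε θ)‖ ≤ S1 d S w := by
  have hε : 1 - ε ≠ 0 := by linarith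
  rw [norm_mul, norm_prod_zOf hε1, SbarC_eq hS]
  calc _ ≤ (1 - ε) * (layerWeight S w 0 + layerWeight S w (-1) + layerWeight S w 1 / (1 - ε)) := by
        refine mul_le_mul_of_nonneg_left ((norm_add_le _ _).trans (add_le_add
          (norm_QC_add_last_mul_AC_le hw hε0 hε1 θ) ?_)) (by linarith)
        rw [norm_div, norm_zOf_last hε1]
        exact div_le_div_of_nonneg_right (norm_BC_le hw ε θ) (by linarith)
    _ = S1 d S w - ε * (layerWeight S w 0 + layerWeight S w (-1)) := by
        rw [S1_eq hS, mul_add, mul_div_cancel₀ _ hε]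
        ring
    _ ≤ S1 d S w := sub_le_self _
        (mul_nonneg hε0 (add_nonneg (layerWeight_nonneg hw _) (layerWeight_nonneg hw _)))

theorem norm_prod_mul_QC_add_le (hS : SmallSteps S) (hw : ∀ i ∈ S, 0 ≤ w i) (hε0 : 0 ≤ ε)
    (hε1 : ε < 1) (θ : Fin (d + 1) → ℝ) :
    ‖(∏ j, zOf d ε θ j) * (QC d S w (zOf d ε θ)
      + zOf d ε θ (Fin.last d) * AC d S w (zOf d ε θ))‖ ≤ S1 d S w := by
  rw [norm_mul, norm_prod_zOf hε1]
  calc _ ≤ layerWeight S w 0 + layerWeight S w (-1) :=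
        (mul_le_of_le_one_left (norm_nonneg _) (by linarith)).trans
          (norm_QC_add_last_mul_AC_le hw hε0 hε1 θ)
    _ ≤ S1 d S w := by
        rw [S1_eq hS]
        linarith [layerWeight_nonneg hw 1]

theorem norm_twoPoleCoeff_le {V U a : ℂ} {M : ℝ} (hV : ‖V‖ ≤ M) (hU : ‖U‖ ≤ M) (ha : ‖a‖ ≤ M)
    (n : ℕ) : ‖twoPoleCoeff V U a n‖ ≤ (n + 1) * M ^ n := by
  have hM : 0 ≤ M := (norm_nonneg V).trans hV
  have hterm (i : ℕ) (hi : i ∈ range n) : ‖a * (U ^ i * V ^ (n - 1 - i))‖ ≤ M ^ n := by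
    have hn : n = 1 + (i + (n - 1 - i)) := by
      have := mem_range.mp hi
      omega
    calc _ = ‖a‖ * (‖U‖ ^ i * ‖V‖ ^ (n - 1 - i)) := by simp only [norm_mul, norm_pow]
      _ ≤ M * (M ^ i * M ^ (n - 1 - i)) := by gcongr
      _ = M ^ n := by rw [← pow_add, ← pow_succ', add_comm, ← hn]
  calc ‖twoPoleCoeff V U a n‖ ≤ ‖V‖ ^ n + ∑ i ∈ range n, ‖a * (U ^ i * V ^ (n - 1 - i))‖ := by
        rw [twoPoleCoeff, mul_sum, ← norm_pow]
        exact (norm_sub_le _ _).trans (by gcongr; exact norm_sum_le _ _)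
    _ ≤ M ^ n + ∑ _i ∈ range n, M ^ n := by gcongr with i hi; exact hterm i hi
    _ = (n + 1) * M ^ n := by
        rw [sum_const, card_range, nsmul_eq_mul]
        ring

theorem norm_residueKernel_le (hw : ∀ i ∈ S, 0 ≤ w i) (hε0 : 0 < ε) (hε1 : ε < 1) {M : ℝ}
    {θ : Fin (d + 1) → ℝ} (hM : layerWeight S w 0 + layerWeight S w (-1) ≤ M)
    (hV : ‖SbarC d S w (zOf d ε θ)‖ ≤ M) (n : ℕ) :
    ‖residueKernel d S w n (zOf d ε θ)‖ ≤ 2 ^ d / ε * ((n + 1) * M ^ n) := by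
  have hP : ‖∏ j : Fin d, (1 + zOf d ε θ (Fin.castSucc j))‖ ≤ 2 ^ d := by
    rw [norm_prod]
    calc _ ≤ ∏ _j : Fin d, (2 : ℝ) := prod_le_prod (fun _ _ => norm_nonneg _) fun j _ =>
          (norm_add_le _ _).trans (by rw [norm_zOf_castSucc, norm_one]; norm_num)
      _ = 2 ^ d := by simp
  have hlast : ε ≤ ‖1 - zOf d ε θ (Fin.last d)‖ := by
    have := norm_sub_norm_le 1 (zOf d ε θ (Fin.last d))
    rw [norm_zOf_last hε1, norm_one] at this
    linarith
  have hcoeff := norm_twoPoleCoeff_le hV ((norm_QC_add_last_mul_AC_le hw hε0.le hε1 θ).trans hM)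
    ((norm_last_mul_AC_le hw hε0.le hε1 θ).trans (by linarith [layerWeight_nonneg hw 0])) n
  rw [residueKernel, norm_mul, norm_div]
  gcongr

end Bounds

section ContourIntegral

variable {d : ℕ} {S : Finset (Fin (d + 1) → ℤ)} {w : (Fin (d + 1) → ℤ) → ℝ} {γ ε δ : ℝ}

theorem setIntegral_GC_div_HC (hS : SmallSteps S) (hw : ∀ i ∈ S, 0 ≤ w i) (hS1 : 0 < S1 d S w)
    (hγ0 : 0 < γ) (hγ1 : γ < 1) (hε0 : 0 ≤ ε) (hε1 : ε < 1) (n : ℕ) (θ : Fin (d + 1) → ℝ) :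
    ∫ φ in Set.Ioo 0 (2 * π),
      GC d S w (zOf d ε θ) ((((1 - γ) / S1 d S w : ℝ) : ℂ) * Complex.exp (Complex.I * φ)) /
        HC d S w (zOf d ε θ) ((((1 - γ) / S1 d S w : ℝ) : ℂ) * Complex.exp (Complex.I * φ)) *
        (((∏ j, zOf d ε θ j) *
          ((((1 - γ) / S1 d S w : ℝ) : ℂ) * Complex.exp (Complex.I * φ))) ^ n)⁻¹
      = (2 * π) • residueKernel d S w n (zOf d ε θ) := by
  have hr : 0 < (1 - γ) / S1 d S w := div_pos (by linarith) hS1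
  have hinside {x : ℝ} (hx : x ≤ S1 d S w) : (1 - γ) / S1 d S w * x < 1 :=
    calc (1 - γ) / S1 d S w * x ≤ (1 - γ) / S1 d S w * S1 d S w := by gcongr
      _ = 1 - γ := div_mul_cancel₀ _ hS1.ne'
      _ < 1 := by linarith
  rw [setIntegral_Ioo_circle (fun t => GC d S w (zOf d ε θ) t / HC d S w (zOf d ε θ) t *
    (((∏ j, zOf d ε θ j) * t) ^ n)⁻¹), circleAverage_GC_div_HC hr (prod_zOf_ne_zero hε1 θ)
    (hinside (norm_prod_mul_SbarC_le hS hw hε0 hε1 θ))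
    (hinside (norm_prod_mul_QC_add_le hS hw hε0 hε1 θ))]

theorem fullIntegral_eq (hS : SmallSteps S) (hw : ∀ i ∈ S, 0 ≤ w i) (hS1 : 0 < S1 d S w)
    (hγ0 : 0 < γ) (hγ1 : γ < 1) (hε0 : 0 ≤ ε) (hε1 : ε < 1) (n : ℕ) (δ : ℝ) :
    fullIntegral d S w n ε δ ((1 - γ) / S1 d S w)
      = ((2 * π) ^ (d + 1) : ℝ)⁻¹ •
        ∫ θ in Nparam d S w δ, residueKernel d S w n (zOf d ε θ) := by
  rw [fullIntegral]
  simp only [setIntegral_GC_div_HC hS hw hS1 hγ0 hγ1 hε0 hε1]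
  rw [integral_smul, smul_smul]
  congr 1
  field_simp
  ring

theorem measurableSet_Nparam (δ : ℝ) : MeasurableSet (Nparam d S w δ) :=
  Finset.measurableSet_biUnion _ fun _ _ => MeasurableSet.univ_pi fun _ => measurableSet_Ioo

theorem Nparam_subset_cell (hδ : δ ≤ 1 / 4) : Nparam d S w δ ⊆ cell d := by
  intro θ hθ
  simp only [Nparam, Set.mem_iUnion, box, Set.mem_univ_pi, Set.mem_Ioo, argOf] at hθ
  obtain ⟨m, -, hm⟩ := hθ
  rw [cell, Set.mem_univ_pi]
  intro j
  obtain ⟨hlower, hupper⟩ := hm j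
  have hm3 : ((m j : ℕ) : ℝ) ≤ 3 := by exact_mod_cast Nat.le_of_lt_succ (m j).isLt
  constructor <;> nlinarith [Real.pi_gt_three, (Nat.cast_nonneg _ : (0 : ℝ) ≤ ((m j : ℕ) : ℝ))]

theorem norm_walkWeight_sub_fullIntegral_le (hS : SmallSteps S) (hw : ∀ i ∈ S, 0 ≤ w i)
    (hsym : ∀ k : Fin d, SymmetricAxis (d + 1) S w (Fin.castSucc k)) (hS1 : 0 < S1 d S w)
    (hγ0 : 0 < γ) (hγ1 : γ < 1) (hε0 : 0 < ε) (hε1 : ε < 1) (hδ : δ ≤ 1 / 4) (n : ℕ) {C : ℝ}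
    (hC0 : 0 ≤ C)
    (hC : ∀ θ ∈ cell d \ Nparam d S w δ, ‖residueKernel d S w n (zOf d ε θ)‖ ≤ C) :
    ‖(walkWeight (d + 1) S w n : ℂ) - fullIntegral d S w n ε δ ((1 - γ) / S1 d S w)‖ ≤ C := by
  have hπ : (0 : ℝ) < (2 * π) ^ (d + 1) := by positivity
  have hwalk : (walkWeight (d + 1) S w n : ℂ) = ((2 * π) ^ (d + 1) : ℝ)⁻¹ •
      ∫ θ in cell d, residueKernel d S w n (zOf d ε θ) := by
    have : ((π : ℝ) : ℂ) ≠ 0 := by exact_mod_cast Real.pi_ne_zero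
    rw [setIntegral_residueKernel hS hsym hε0 hε1, Complex.real_smul]
    push_cast
    field_simp
  have hvol : volume (cell d) < ⊤ := by
    rw [cell, arc, Real.volume_pi_Ioc]
    exact ENNReal.prod_lt_top fun _ _ => ENNReal.ofReal_lt_top
  rw [hwalk, fullIntegral_eq hS hw hS1 hγ0 hγ1 hε0.le hε1, ← smul_sub,
    ← setIntegral_sdiff (measurableSet_Nparam δ)
      (integrableOn_cell (continuous_residueKernel hS hε0 hε1 n)) (Nparam_subset_cell hδ),
    norm_smul, norm_inv, Real.norm_of_nonneg hπ.le, inv_mul_le_iff₀ hπ, mul_comm]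
  calc _ ≤ C * volume.real (cell d \ Nparam d S w δ) :=
        norm_setIntegral_le_of_norm_le_const ((measure_mono Set.sdiff_subset).trans_lt hvol) hC
    _ ≤ C * (2 * π) ^ (d + 1) := by
        rw [← volume_real_cell]
        exact mul_le_mul_of_nonneg_left (measureReal_mono Set.sdiff_subset hvol.ne) hC0

end ContourIntegral

section Phases

variable {d : ℕ} {S : Finset (Fin (d + 1) → ℤ)} {w : (Fin (d + 1) → ℤ) → ℝ}

/-- The argument of the monomial of the step `i` in `S̄`, at the point with angles `θ`. -/
def phase (i : Fin (d + 1) → ℤ) (θ : Fin (d + 1) → ℝ) : ℝ :=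
  ∑ j : Fin d, (i (Fin.castSucc j) : ℝ) * θ (Fin.castSucc j) - i (Fin.last d) * θ (Fin.last d)

theorem SbarC_zOf (ε : ℝ) (θ : Fin (d + 1) → ℝ) :
    SbarC d S w (zOf d ε θ) = ∑ i ∈ S, ((w i * (1 - ε) ^ (-(i (Fin.last d))) : ℝ) : ℂ) *
      Complex.exp (phase i θ * Complex.I) := by
  refine sum_congr rfl fun i _ => ?_
  have hphase : (phase i θ : ℂ) * Complex.I
      = ∑ j : Fin d, (i (Fin.castSucc j) : ℂ) * (Complex.I * θ (Fin.castSucc j))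
        + ((-(i (Fin.last d)) : ℤ) : ℂ) * (Complex.I * θ (Fin.last d)) := by
    simp only [phase]
    push_cast
    rw [sub_mul, sum_mul, sub_eq_add_neg, ← neg_mul]
    exact congrArg₂ _ (sum_congr rfl fun j _ => by ring) (by ring)
  simp only [zOf_castSucc, zOf_last, mul_zpow, ← Complex.exp_int_mul, ← Complex.exp_sum]
  rw [hphase, Complex.exp_add]
  push_cast
  ring

theorem phase_update (i : Fin (d + 1) → ℤ) (k : Fin d) (v : ℤ) (θ : Fin (d + 1) → ℝ) :
    phase (Function.update i (Fin.castSucc k) v) θ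
      = phase i θ + (v - i (Fin.castSucc k)) * θ (Fin.castSucc k) := by
  have hterm (j : Fin d) : (Function.update i (Fin.castSucc k) v (Fin.castSucc j) : ℝ)
      * θ (Fin.castSucc j) = i (Fin.castSucc j) * θ (Fin.castSucc j)
        + if j = k then (v - i (Fin.castSucc k)) * θ (Fin.castSucc k) else 0 := by
    by_cases hjk : j = k
    · subst hjk
      simp only [Function.update_self, if_true]
      ring
    · simp [hjk]
  simp only [phase, hterm, sum_add_distrib, sum_ite_eq', mem_univ, if_true]
  rw [Function.update_of_ne (Fin.castSucc_lt_last k).ne']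
  ring

theorem abs_phase_sub_le (hS : SmallSteps S) {i : Fin (d + 1) → ℤ} (hi : i ∈ S)
    {θ θ' : Fin (d + 1) → ℝ} {b : ℝ} (hb : ∀ j, |θ j - θ' j| ≤ b) :
    |phase i θ - phase i θ'| ≤ (d + 1) * b := by
  have hterm (j : Fin (d + 1)) : |(i j : ℝ) * (θ j - θ' j)| ≤ b := by
    have hij : |(i j : ℝ)| ≤ 1 := by rcases hS i hi j with h | h | h <;> simp [h]
    rw [abs_mul]
    exact (mul_le_of_le_one_left (abs_nonneg _) hij).trans (hb j)
  calc |phase i θ - phase i θ'|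
      = |∑ j : Fin d, (i (Fin.castSucc j) : ℝ) * (θ (Fin.castSucc j) - θ' (Fin.castSucc j))
        - i (Fin.last d) * (θ (Fin.last d) - θ' (Fin.last d))| := by
        simp only [phase, mul_sub, sum_sub_distrib]
        ring_nf
    _ ≤ ∑ _j : Fin d, b + b := (abs_sub _ _).trans (add_le_add
        ((abs_sum_le_sum_abs _ _).trans (sum_le_sum fun j _ => hterm _)) (hterm _))
    _ = (d + 1) * b := by
        rw [sum_const, card_univ, Fintype.card_fin, nsmul_eq_mul]
        ring

theorem abs_phase_sub_phase_sub_le (hS : SmallSteps S) {i k : Fin (d + 1) → ℤ} (hi : i ∈ S)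
    (hk : k ∈ S) {θ θ' : Fin (d + 1) → ℝ} {b : ℝ} (hb : ∀ j, |θ j - θ' j| ≤ b / 2) :
    |(phase i θ - phase k θ) - (phase i θ' - phase k θ')| ≤ (d + 1) * b := by
  rw [sub_sub_sub_comm]
  calc _ ≤ |phase i θ - phase i θ'| + |phase k θ - phase k θ'| := abs_sub _ _
    _ ≤ (d + 1) * (b / 2) + (d + 1) * (b / 2) :=
        add_le_add (abs_phase_sub_le hS hi hb) (abs_phase_sub_le hS hk hb)
    _ = (d + 1) * b := by ring

theorem norm_sum_mul_exp_sq {ι : Type*} (s : Finset ι) (c ψ : ι → ℝ) :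
    ‖∑ i ∈ s, (c i : ℂ) * Complex.exp (ψ i * Complex.I)‖ ^ 2
      = (∑ i ∈ s, c i) ^ 2 - ∑ i ∈ s, ∑ k ∈ s, c i * c k * (1 - Real.cos (ψ i - ψ k)) := by
  rw [← Complex.normSq_eq_norm_sq, Complex.normSq_apply]
  simp only [Complex.re_sum, Complex.im_sum, Complex.re_ofReal_mul, Complex.im_ofReal_mul,
    Complex.exp_ofReal_mul_I_re, Complex.exp_ofReal_mul_I_im, pow_two, sum_mul_sum,
    ← sum_add_distrib, ← sum_sub_distrib]
  refine sum_congr rfl fun i _ => sum_congr rfl fun k _ => ?_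
  rw [Real.cos_sub]
  ring

theorem norm_sum_mul_exp_sq_le {ι : Type*} {s : Finset ι} {c ψ : ι → ℝ} {ν κ : ℝ} (hν : 0 ≤ ν)
    (hκ : 0 ≤ κ) (hc : ∀ i ∈ s, ν ≤ c i)
    (hpair : ∃ i ∈ s, ∃ k ∈ s, κ ≤ 1 - Real.cos (ψ i - ψ k)) :
    ‖∑ i ∈ s, (c i : ℂ) * Complex.exp (ψ i * Complex.I)‖ ^ 2
      ≤ (∑ i ∈ s, c i) ^ 2 - ν ^ 2 * κ := by
  obtain ⟨i, hi, k, hk, hik⟩ := hpair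
  have hc0 {i : ι} (hi : i ∈ s) : 0 ≤ c i := hν.trans (hc i hi)
  have hterm (i : ι) (hi : i ∈ s) (k : ι) (hk : k ∈ s) :
      0 ≤ c i * c k * (1 - Real.cos (ψ i - ψ k)) :=
    mul_nonneg (mul_nonneg (hc0 hi) (hc0 hk)) (sub_nonneg.mpr (Real.cos_le_one _))
  rw [norm_sum_mul_exp_sq]
  refine sub_le_sub_left ?_ _
  calc ν ^ 2 * κ ≤ c i * c k * (1 - Real.cos (ψ i - ψ k)) := by
        rw [pow_two]
        exact mul_le_mul (mul_le_mul (hc i hi) (hc k hk) hν (hc0 hi)) hik hκ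
          (mul_nonneg (hc0 hi) (hc0 hk))
    _ ≤ ∑ k ∈ s, c i * c k * (1 - Real.cos (ψ i - ψ k)) :=
        single_le_sum (f := fun k => c i * c k * (1 - Real.cos (ψ i - ψ k))) (hterm i hi) hk
    _ ≤ _ := single_le_sum (f := fun i => ∑ k ∈ s, c i * c k * (1 - Real.cos (ψ i - ψ k)))
        (fun i hi => sum_nonneg (hterm i hi)) hi

theorem exists_int_sq_le_one_sub_cos (x : ℝ) :
    ∃ p : ℤ, 2 / π ^ 2 * (x - 2 * π * p) ^ 2 ≤ 1 - Real.cos x := by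
  let p := round (x / (2 * π))
  have hp : |x - 2 * π * p| ≤ π := by
    have hround := abs_sub_round (x / (2 * π))
    have hx : x - 2 * π * p = 2 * π * (x / (2 * π) - p) := by
      field_simp [Real.pi_pos.ne']
    rw [hx, abs_mul, abs_of_pos Real.two_pi_pos]
    nlinarith [Real.pi_pos]
  have hcos := Real.cos_le_one_sub_mul_cos_sq hp
  rw [mul_comm (2 * π), Real.cos_sub_int_mul_two_pi, mul_comm (p : ℝ)] at hcos
  exact ⟨p, by linarith⟩

end Phases

section ContributingPoints

variable {d : ℕ} {S : Finset (Fin (d + 1) → ℤ)} {w : (Fin (d + 1) → ℤ) → ℝ}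
  {m : Fin (d + 1) → Fin 4} {θ : Fin (d + 1) → ℝ} {δ : ℝ}

theorem wOf_eq_exp (m : Fin (d + 1) → Fin 4) (j : Fin (d + 1)) :
    wOf d m j = Complex.exp (argOf d m j * Complex.I) := by
  have harg : (argOf d m j : ℂ) * Complex.I = (m j : ℕ) * (π / 2 * Complex.I) := by
    rw [argOf]
    push_cast
    ring
  rw [wOf, harg, Complex.exp_nat_mul, Complex.exp_pi_div_two_mul_I]

theorem wOf_inv_of_real {j : Fin (d + 1)} (hj : m j = 0 ∨ m j = 2) :
    (wOf d m j)⁻¹ = wOf d m j := by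
  rcases hj with h | h <;> simp [wOf, h]

theorem prod_wOf_zpow (hm : ∀ j : Fin d, m (Fin.castSucc j) = 0 ∨ m (Fin.castSucc j) = 2)
    (i : Fin (d + 1) → ℤ) :
    ∏ j, wOf d m j ^ i j = Complex.exp ((-phase i (argOf d m) : ℝ) * Complex.I) := by
  have hhat (j : Fin d) : wOf d m (Fin.castSucc j)
      = Complex.exp (-(argOf d m (Fin.castSucc j) * Complex.I)) := by
    rw [Complex.exp_neg, ← wOf_eq_exp, wOf_inv_of_real (hm j)]
  have hphase : ((-phase i (argOf d m) : ℝ) : ℂ) * Complex.I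
      = ∑ j : Fin d, (i (Fin.castSucc j) : ℂ) * -(argOf d m (Fin.castSucc j) * Complex.I)
        + i (Fin.last d) * (argOf d m (Fin.last d) * Complex.I) := by
    simp only [phase]
    push_cast
    rw [neg_sub, sub_mul, sum_mul, sub_eq_neg_add, ← sum_neg_distrib]
    exact congrArg₂ _ (sum_congr rfl fun j _ => by ring) (by ring)
  rw [Fin.prod_univ_castSucc, wOf_eq_exp m (Fin.last d)]
  simp only [hhat, ← Complex.exp_int_mul, ← Complex.exp_sum]
  rw [hphase, Complex.exp_add]

theorem mem_GammaIdx_of_cos_eq_one (hw : ∀ i ∈ S, 0 ≤ w i)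
    (hm : ∀ j : Fin d, m (Fin.castSucc j) = 0 ∨ m (Fin.castSucc j) = 2)
    (hcos : ∀ i ∈ S, ∀ k ∈ S, Real.cos (phase i (argOf d m) - phase k (argOf d m)) = 1) :
    m ∈ GammaIdx d S w := by
  have hcorr : ∑ i ∈ S, ∑ k ∈ S, w i * w k
      * (1 - Real.cos (-phase i (argOf d m) - -phase k (argOf d m))) = 0 :=
    sum_eq_zero fun i hi => sum_eq_zero fun k hk => by
      rw [neg_sub_neg, hcos k hk i hi, sub_self, mul_zero]
  have hSC : ‖SC d S w (wOf d m)‖ = S1 d S w := by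
    rw [S1, ← sq_eq_sq₀ (norm_nonneg _) (sum_nonneg hw)]
    simp only [SC, prod_wOf_zpow hm]
    rw [norm_sum_mul_exp_sq, hcorr, sub_zero]
  have hprod : ‖∏ j, wOf d m j‖ = 1 := by simp [wOf, norm_prod]
  rw [GammaIdx, mem_filter]
  exact ⟨mem_univ _, hm, by rw [norm_div, norm_mul, norm_one, hprod, hSC, one_mul]⟩

theorem phase_argOf (m : Fin (d + 1) → Fin 4) (i : Fin (d + 1) → ℤ) :
    ∃ u : ℤ, phase i (argOf d m) = π / 2 * u := by
  refine ⟨∑ j : Fin d, i (Fin.castSucc j) * ((m (Fin.castSucc j) : ℕ) : ℤ)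
    - i (Fin.last d) * ((m (Fin.last d) : ℕ) : ℤ), ?_⟩
  simp only [phase, argOf]
  push_cast
  rw [mul_sub, mul_sum]
  exact congrArg₂ _ (sum_congr rfl fun j _ => by ring) (by ring)

theorem cos_eq_one_of_abs_sub_lt {u p : ℤ} (h : |π / 2 * u - 2 * π * p| < π / 2) :
    Real.cos (π / 2 * u) = 1 := by
  have hu : u = 4 * p := by
    have hscale : π / 2 * u - 2 * π * p = π / 2 * ((u - 4 * p : ℤ) : ℝ) := by
      push_cast
      ring
    rw [hscale, abs_mul, abs_of_pos Real.pi_div_two_pos,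
      mul_lt_iff_lt_one_right Real.pi_div_two_pos] at h
    have := Int.abs_lt_one_iff.mp (by exact_mod_cast h)
    omega
  have hturn : π / 2 * u = p * (2 * π) := by
    rw [hu]
    push_cast
    ring
  rw [hturn, Real.cos_int_mul_two_pi]

theorem exists_abs_sub_argOf_le (hδ : δ ≤ 1 / 4) (hθ : θ ∈ cell d) {P : Fin (d + 1) → ℤ}
    (hP : ∀ j, |2 * θ j - π * P j| ≤ δ) :
    ∃ m : Fin (d + 1) → Fin 4, (∀ j, ((m j : ℕ) : ℤ) = P j) ∧
      ∀ j, |θ j - argOf d m j| ≤ δ / 2 := by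
  have hrange (j : Fin (d + 1)) : 0 ≤ P j ∧ P j < 4 := by
    obtain ⟨hlower, hupper⟩ := Set.mem_univ_pi.mp hθ j
    have hj := abs_le.mp (hP j)
    have hπ := Real.pi_gt_three
    have h1 : (-1 : ℝ) < P j := by nlinarith
    have h2 : (P j : ℝ) < 4 := by nlinarith
    have h1' : -1 < P j := by exact_mod_cast h1
    exact ⟨by omega, by exact_mod_cast h2⟩
  have hcast (j : Fin (d + 1)) : ((P j).toNat : ℤ) = P j := Int.toNat_of_nonneg (hrange j).1
  refine ⟨fun j => ⟨(P j).toNat, by have := hrange j; omega⟩, hcast, fun j => ?_⟩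
  have hcast' : (((P j).toNat : ℕ) : ℝ) = P j := by exact_mod_cast hcast j
  have hhalf : θ j - (P j : ℝ) * π / 2 = (2 * θ j - π * P j) / 2 := by ring
  simp only [argOf, hcast']
  rw [hhalf, abs_div, abs_two]
  linarith [hP j]

theorem exists_abs_hat_sub_le (hsym : ∀ k : Fin d, SymmetricAxis (d + 1) S w (Fin.castSucc k))
    {k : Fin d} (hfwd : ∃ i ∈ S, i (Fin.castSucc k) = 1) {η : ℝ}
    (hclose : ∀ i ∈ S, ∀ k ∈ S, ∃ p : ℤ, |phase i θ - phase k θ - 2 * π * p| ≤ η) :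
    ∃ r : ℤ, |2 * θ (Fin.castSucc k) - 2 * π * r| ≤ η := by
  obtain ⟨i, hi, hik⟩ := hfwd
  obtain ⟨r, hr⟩ := hclose i hi _ (hsym k i hi).1
  rw [phase_update, hik] at hr
  refine ⟨r, le_of_eq_of_le (congrArg _ ?_) hr⟩
  push_cast
  ring

theorem exists_abs_last_sub_le (hS : SmallSteps S) (hfwd : ∃ i ∈ S, i (Fin.last d) = 1)
    (hbwd : ∃ i ∈ S, i (Fin.last d) = -1) {η : ℝ} (hη : 0 ≤ η) {r : Fin d → ℤ}
    (hr : ∀ k, |2 * θ (Fin.castSucc k) - 2 * π * r k| ≤ η)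
    (hclose : ∀ i ∈ S, ∀ k ∈ S, ∃ p : ℤ, |phase i θ - phase k θ - 2 * π * p| ≤ η) :
    ∃ P : ℤ, |2 * θ (Fin.last d) - π * P| ≤ (d + 2) * η := by
  obtain ⟨a, ha, hal⟩ := hfwd
  obtain ⟨b, hb, hbl⟩ := hbwd
  obtain ⟨p, hp⟩ := hclose b hb a ha
  let θ' : Fin (d + 1) → ℝ := Fin.snoc (fun k => π * r k) (θ (Fin.last d))
  have hθ' (j : Fin (d + 1)) : |θ j - θ' j| ≤ η / 2 := by
    induction j using Fin.lastCases with
    | last => simpa [θ'] using div_nonneg hη two_pos.le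
    | cast k =>
      have hk : 2 * θ (Fin.castSucc k) - 2 * π * r k = 2 * (θ (Fin.castSucc k) - π * r k) := by
        ring
      have := hr k
      rw [hk, abs_mul, abs_two] at this
      simp only [θ', Fin.snoc_castSucc]
      linarith
  let P : ℤ := 2 * p - ∑ j : Fin d, (b (Fin.castSucc j) - a (Fin.castSucc j)) * r j
  have hrounded : phase b θ' - phase a θ' - 2 * π * p = 2 * θ (Fin.last d) - π * P := by
    simp only [phase, θ', P, Fin.snoc_castSucc, Fin.snoc_last, hal, hbl, sub_mul, sum_sub_distrib]
    push_cast
    simp only [mul_sub, mul_sum, mul_left_comm _ π]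
    ring
  refine ⟨P, ?_⟩
  calc |2 * θ (Fin.last d) - π * P|
      = |(phase b θ - phase a θ - 2 * π * p)
        - ((phase b θ - phase a θ) - (phase b θ' - phase a θ'))| := by
        rw [← hrounded]
        ring_nf
    _ ≤ η + (d + 1) * η :=
        (abs_sub _ _).trans (add_le_add hp (abs_phase_sub_phase_sub_le hS hb ha hθ'))
    _ = (d + 2) * η := by ring

theorem mem_Nparam_of_abs_sub_argOf_le (hS : SmallSteps S) (hw : ∀ i ∈ S, 0 ≤ w i)
    (hδ0 : 0 < δ) (hδ : (d + 2) * δ ≤ 1 / 4)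
    (hm : ∀ j : Fin d, m (Fin.castSucc j) = 0 ∨ m (Fin.castSucc j) = 2)
    (hdist : ∀ j, |θ j - argOf d m j| ≤ δ / 2)
    (hclose : ∀ i ∈ S, ∀ k ∈ S, ∃ p : ℤ, |phase i θ - phase k θ - 2 * π * p| ≤ δ) :
    θ ∈ Nparam d S w δ := by
  have hmem : m ∈ GammaIdx d S w := by
    refine mem_GammaIdx_of_cos_eq_one hw hm fun i hi k hk => ?_
    obtain ⟨u, hu⟩ := phase_argOf m i
    obtain ⟨v, hv⟩ := phase_argOf m k
    obtain ⟨p, hp⟩ := hclose i hi k hk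
    have hmove := abs_phase_sub_phase_sub_le hS hi hk hdist
    rw [hu, hv] at hmove ⊢
    rw [← mul_sub, ← Int.cast_sub]
    refine cos_eq_one_of_abs_sub_lt (p := p) ?_
    rw [abs_le] at hp hmove
    push_cast
    rw [abs_lt]
    constructor <;> linarith [Real.pi_gt_three]
  have hbox : θ ∈ box d m δ := by
    rw [box, Set.mem_univ_pi]
    intro j
    have := abs_le.mp (hdist j)
    constructor <;> linarith
  simp only [Nparam, Set.mem_iUnion]
  exact ⟨m, hmem, hbox⟩

theorem mem_Nparam_of_phases_close (hS : SmallSteps S) (hw : ∀ i ∈ S, 0 ≤ w i)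
    (hsym : ∀ k : Fin d, SymmetricAxis (d + 1) S w (Fin.castSucc k))
    (hfwd : ∀ k : Fin (d + 1), ∃ i ∈ S, i k = 1) (hbwd : ∃ i ∈ S, i (Fin.last d) = -1)
    (hδ0 : 0 < δ) (hδ : (d + 2) * δ ≤ 1 / 4) (hθ : θ ∈ cell d)
    (hclose : ∀ i ∈ S, ∀ k ∈ S, ∃ p : ℤ,
      |phase i θ - phase k θ - 2 * π * p| ≤ δ / (d + 2)) :
    θ ∈ Nparam d S w δ := by
  have hd : (0 : ℝ) ≤ d := Nat.cast_nonneg d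
  have hη : δ / (d + 2) ≤ δ := div_le_self hδ0.le (by linarith [hd])
  choose r hr using fun k => exists_abs_hat_sub_le hsym (hfwd (Fin.castSucc k)) hclose
  obtain ⟨P, hP⟩ := exists_abs_last_sub_le hS (hfwd (Fin.last d)) hbwd (by positivity) hr hclose
  rw [mul_div_cancel₀ _ (by positivity)] at hP
  obtain ⟨m, hmP, hdist⟩ := exists_abs_sub_argOf_le (δ := δ) (by nlinarith [hd]) hθ
    (P := Fin.snoc (fun k => 2 * r k) P) fun j => by
      induction j using Fin.lastCases with
      | last => simpa using hP
      | cast k =>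
        simp only [Fin.snoc_castSucc]
        push_cast
        rw [← mul_assoc, mul_comm π 2]
        exact (hr k).trans hη
  have hm (k : Fin d) : m (Fin.castSucc k) = 0 ∨ m (Fin.castSucc k) = 2 := by
    have hk := hmP (Fin.castSucc k)
    rw [Fin.snoc_castSucc (α := fun _ => ℤ)] at hk
    have := (m (Fin.castSucc k)).isLt
    simp only [Fin.ext_iff, Fin.val_zero, Fin.val_two]
    omega
  exact mem_Nparam_of_abs_sub_argOf_le hS hw hδ0 hδ hm hdist fun i hi k hk =>
    (hclose i hi k hk).imp fun _ hp => hp.trans hη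

end ContributingPoints

section Decay

variable {d : ℕ} {S : Finset (Fin (d + 1) → ℤ)} {w : (Fin (d + 1) → ℤ) → ℝ} {ε δ : ℝ}

theorem half_le_zpow_neg (hε0 : 0 ≤ ε) (hε : ε ≤ 1 / 2) {e : ℤ}
    (he : e = -1 ∨ e = 0 ∨ e = 1) : 1 / 2 ≤ (1 - ε) ^ (-e) := by
  rcases he with rfl | rfl | rfl
  · norm_num
    linarith
  · norm_num
  · rw [zpow_neg_one]
    linarith [(one_le_inv₀ (by linarith : 0 < 1 - ε)).mpr (by linarith)]

-- The drift condition cancels the term of order `ε`.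
theorem sum_mul_zpow_neg_last_le (hS : SmallSteps S) (hw : ∀ i ∈ S, 0 ≤ w i)
    (hdrift : layerWeight S w 1 ≤ layerWeight S w (-1)) (hε0 : 0 ≤ ε) (hε : ε ≤ 1 / 2) :
    ∑ i ∈ S, w i * (1 - ε) ^ (-(i (Fin.last d))) ≤ S1 d S w * (1 + 2 * ε ^ 2) := by
  have hinv : (1 - ε)⁻¹ ≤ 1 + (ε + 2 * ε ^ 2) := by
    rw [inv_le_iff_one_le_mul₀ (by linarith)]
    nlinarith [sq_nonneg ε]
  rw [sum_mul_last_real hS fun e => (1 - ε) ^ (-e), S1_eq hS]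
  simp only [neg_neg, zpow_one, neg_zero, zpow_zero, zpow_neg]
  calc _ ≤ layerWeight S w (-1) * (1 - ε) + layerWeight S w 0 * 1
        + (layerWeight S w 1 + layerWeight S w (-1) * (ε + 2 * ε ^ 2)) := by
        have hup := mul_le_mul_of_nonneg_left hinv (layerWeight_nonneg hw 1)
        have hdown := mul_le_mul_of_nonneg_right hdrift (by positivity : 0 ≤ ε + 2 * ε ^ 2)
        linarith
    _ = layerWeight S w (-1) * (1 + 2 * ε ^ 2) + layerWeight S w 0 + layerWeight S w 1 := by ring
    _ ≤ _ := by
        nlinarith [mul_nonneg (layerWeight_nonneg hw 0) (sq_nonneg ε),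
          mul_nonneg (layerWeight_nonneg hw 1) (sq_nonneg ε)]

theorem exists_le_one_sub_cos_phase (hS : SmallSteps S) (hw : ∀ i ∈ S, 0 ≤ w i)
    (hsym : ∀ k : Fin d, SymmetricAxis (d + 1) S w (Fin.castSucc k))
    (hfwd : ∀ k : Fin (d + 1), ∃ i ∈ S, i k = 1) (hbwd : ∃ i ∈ S, i (Fin.last d) = -1)
    (hδ0 : 0 < δ) (hδ : (d + 2) * δ ≤ 1 / 4) {θ : Fin (d + 1) → ℝ}
    (hθ : θ ∈ cell d \ Nparam d S w δ) :
    ∃ i ∈ S, ∃ k ∈ S, 2 / π ^ 2 * (δ / (d + 2)) ^ 2 ≤ 1 - Real.cos (phase i θ - phase k θ) := by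
  by_contra! hcos
  refine hθ.2 (mem_Nparam_of_phases_close hS hw hsym hfwd hbwd hδ0 hδ hθ.1 fun i hi k hk => ?_)
  obtain ⟨p, hp⟩ := exists_int_sq_le_one_sub_cos (phase i θ - phase k θ)
  have hlt : (phase i θ - phase k θ - 2 * π * p) ^ 2 < (δ / (d + 2)) ^ 2 :=
    lt_of_mul_lt_mul_left (hp.trans_lt (hcos i hi k hk)) (by positivity)
  exact ⟨p, abs_le_of_sq_le_sq hlt.le (by positivity)⟩

theorem le_mul_exp_of_sq_le {x s κ : ℝ} (hs : 0 < s) (hε : ε ^ 2 ≤ 1)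
    (hx : x ^ 2 ≤ (s * (1 + 2 * ε ^ 2)) ^ 2 - κ) (hκ : 16 * s ^ 2 * ε ^ 2 ≤ κ) :
    x ≤ s * Real.exp (-(κ / (4 * s ^ 2))) := by
  refine le_of_sq_le_sq ?_ (by positivity)
  calc x ^ 2 ≤ s ^ 2 * (1 + 2 * ε ^ 2) ^ 2 - κ := by rwa [mul_pow] at hx
    _ ≤ s ^ 2 * (1 + 8 * ε ^ 2) - κ := by
        gcongr
        nlinarith [sq_nonneg ε]
    _ ≤ s ^ 2 * (-(κ / (2 * s ^ 2)) + 1) := by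
        have : s ^ 2 * (-(κ / (2 * s ^ 2)) + 1) = s ^ 2 - κ / 2 := by
          field_simp
          ring
        linarith
    _ ≤ s ^ 2 * Real.exp (-(κ / (2 * s ^ 2))) := by gcongr; exact Real.add_one_le_exp _
    _ = (s * Real.exp (-(κ / (4 * s ^ 2)))) ^ 2 := by
        rw [mul_pow, ← Real.exp_nat_mul]
        congr 2
        push_cast
        ring

theorem exists_norm_SbarC_le (hS : SmallSteps S) (hw : ∀ i ∈ S, 0 < w i)
    (hsym : ∀ k : Fin d, SymmetricAxis (d + 1) S w (Fin.castSucc k))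
    (hfwd : ∀ k : Fin (d + 1), ∃ i ∈ S, i k = 1)
    (hdrift : layerWeight S w 1 ≤ layerWeight S w (-1)) :
    ∃ l > 0, ∃ c > 0, ∀ ε δ : ℝ, 0 ≤ ε → ε ≤ 1 / 2 → 0 < δ → (d + 2) * δ ≤ 1 / 4 →
      ε ^ 2 ≤ c * δ ^ 2 → ∀ θ ∈ cell d \ Nparam d S w δ,
        ‖SbarC d S w (zOf d ε θ)‖ ≤ S1 d S w * Real.exp (-(l * δ ^ 2)) := by
  have hw0 (i) (hi : i ∈ S) := (hw i hi).le
  obtain ⟨i₁, hi₁, -⟩ := hfwd (Fin.last d)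
  have hS1 : 0 < S1 d S w := sum_pos hw ⟨i₁, hi₁⟩
  have hbwd : ∃ i ∈ S, i (Fin.last d) = -1 := by
    have hpos := (layerWeight_pos hw (hfwd (Fin.last d))).trans_le hdrift
    obtain ⟨i, hi, -⟩ := exists_ne_zero_of_sum_ne_zero hpos.ne'
    exact ⟨i, mem_filter.mp hi⟩
  obtain ⟨i₀, hi₀, hmin⟩ := S.exists_min_image w ⟨i₁, hi₁⟩
  have hν := hw i₀ hi₀
  let κ : ℝ := (w i₀ / 2) ^ 2 * (2 / π ^ 2 * (1 / (d + 2)) ^ 2)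
  have hκ : 0 < κ := by positivity
  refine ⟨κ / (4 * S1 d S w ^ 2), div_pos hκ (by positivity), κ / (16 * S1 d S w ^ 2),
    div_pos hκ (by positivity), ?_⟩
  intro ε δ hε0 hε hδ0 hδ hεδ θ hθ
  have hweight (i) (hi : i ∈ S) : w i₀ / 2 ≤ w i * (1 - ε) ^ (-(i (Fin.last d))) := by
    rw [div_eq_mul_one_div]
    exact mul_le_mul (hmin i hi) (half_le_zpow_neg hε0 hε (hS i hi _)) (by norm_num) (hw0 i hi)
  have hsum0 : 0 ≤ ∑ i ∈ S, w i * (1 - ε) ^ (-(i (Fin.last d))) :=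
    sum_nonneg fun i hi => (half_pos hν).le.trans (hweight i hi)
  have hsq : ‖SbarC d S w (zOf d ε θ)‖ ^ 2
      ≤ (S1 d S w * (1 + 2 * ε ^ 2)) ^ 2 - κ * δ ^ 2 := by
    rw [SbarC_zOf]
    calc _ ≤ _ := norm_sum_mul_exp_sq_le (half_pos hν).le (by positivity) hweight
          (exists_le_one_sub_cos_phase hS hw0 hsym hfwd hbwd hδ0 hδ hθ)
      _ ≤ _ := sub_le_sub_right (pow_le_pow_left₀ hsum0
          (sum_mul_zpow_neg_last_le hS hw0 hdrift hε0 hε) 2) _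
      _ = _ := by ring
  rw [div_mul_eq_mul_div]
  refine le_mul_exp_of_sq_le hS1 (by nlinarith) hsq ?_
  rw [div_mul_eq_mul_div, le_div_iff₀ (by positivity)] at hεδ
  linarith

end Decay

section Localization

variable {d : ℕ} {S : Finset (Fin (d + 1) → ℤ)} {w : (Fin (d + 1) → ℤ) → ℝ} {γ : ℝ}

theorem exists_norm_walkWeight_sub_fullIntegral_le (hS : SmallSteps S) (hw : ∀ i ∈ S, 0 < w i)
    (hsym : ∀ k : Fin d, SymmetricAxis (d + 1) S w (Fin.castSucc k))
    (hfwd : ∀ k : Fin (d + 1), ∃ i ∈ S, i k = 1)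
    (hdrift : layerWeight S w 1 ≤ layerWeight S w (-1)) (hγ0 : 0 < γ) (hγ1 : γ < 1) :
    ∃ l > 0, ∃ c > 0, ∀ (n : ℕ) (ε δ : ℝ), 0 < ε → ε ≤ 1 / 2 → 0 < δ → (d + 2) * δ ≤ 1 / 4 →
      ε ^ 2 ≤ c * δ ^ 2 →
      ‖(walkWeight (d + 1) S w n : ℂ) - fullIntegral d S w n ε δ ((1 - γ) / S1 d S w)‖
        ≤ S1 d S w ^ n * (2 ^ d / ε * ((n + 1) * Real.exp (-(l * δ ^ 2)) ^ n)) := by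
  have hw0 (i) (hi : i ∈ S) := (hw i hi).le
  have hup := layerWeight_pos hw (hfwd (Fin.last d))
  have hS1 : 0 < S1 d S w := sum_pos hw ((hfwd (Fin.last d)).imp fun _ h => h.1)
  obtain ⟨l, hl, c, hc, hdecay⟩ := exists_norm_SbarC_le hS hw hsym hfwd hdrift
  let l' := min l (layerWeight S w 1 / S1 d S w)
  refine ⟨l', by positivity, c, hc, fun n ε δ hε0 hε hδ0 hδ hεδ => ?_⟩
  have hδ4 : δ ≤ 1 / 4 := by nlinarith [(Nat.cast_nonneg d : (0 : ℝ) ≤ d)]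
  have hV (θ) (hθ : θ ∈ cell d \ Nparam d S w δ) :
      ‖SbarC d S w (zOf d ε θ)‖ ≤ S1 d S w * Real.exp (-(l' * δ ^ 2)) := by
    refine (hdecay ε δ hε0.le hε hδ0 hδ hεδ θ hθ).trans ?_
    gcongr
    exact min_le_left _ _
  have hU : layerWeight S w 0 + layerWeight S w (-1)
      ≤ S1 d S w * Real.exp (-(l' * δ ^ 2)) := by
    have hl' : l' * δ ^ 2 ≤ layerWeight S w 1 / S1 d S w * 1 :=
      mul_le_mul (min_le_right _ _) (by nlinarith) (sq_nonneg δ) (by positivity)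
    calc layerWeight S w 0 + layerWeight S w (-1) = S1 d S w - layerWeight S w 1 := by
          rw [S1_eq hS]
          ring
      _ = S1 d S w * (-(layerWeight S w 1 / S1 d S w * 1) + 1) := by
          field_simp
          ring
      _ ≤ S1 d S w * Real.exp (-(l' * δ ^ 2)) := by
          gcongr
          exact (by linarith : _ ≤ -(l' * δ ^ 2) + 1).trans (Real.add_one_le_exp _)
  refine norm_walkWeight_sub_fullIntegral_le hS hw0 hsym hS1 hγ0 hγ1 hε0 (by linarith) hδ4 n
    (by positivity) fun θ hθ => ?_
  refine (norm_residueKernel_le hw0 hε0 (by linarith) hU (hV θ hθ) n).trans_eq ?_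
  rw [mul_pow]
  ring

theorem tendsto_pow_mul_stretched_exp (C a : ℝ) {b l : ℝ} (hb : 0 < b) (hl : 0 < l) (m : ℕ) :
    Tendsto (fun n : ℕ => (n : ℝ) ^ m * (C * (n : ℝ) ^ a * Real.exp (-l * (n : ℝ) ^ b)))
      atTop (nhds 0) := by
  have hexp := ((tendsto_rpow_mul_exp_neg_mul_atTop_nhds_zero ((m + a) / b) l hl).comp
    ((tendsto_rpow_atTop hb).comp tendsto_natCast_atTop_atTop)).const_mul C
  rw [mul_zero] at hexp
  refine hexp.congr' ?_
  filter_upwards [eventually_gt_atTop 0] with n hn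
  have hn' : (0 : ℝ) < n := by exact_mod_cast hn
  simp only [Function.comp_apply]
  rw [← Real.rpow_mul hn'.le, mul_div_cancel₀ _ hb.ne', Real.rpow_add hn', Real.rpow_natCast]
  ring

theorem eventually_scales_small (d : ℕ) {α β c : ℝ} (hβ : 0 < β) (hβα : β < α) (hc : 0 < c) :
    ∀ᶠ n : ℕ in atTop, (n : ℝ) ^ (-α) ≤ 1 / 2 ∧ (d + 2) * (n : ℝ) ^ (-β) ≤ 1 / 4 ∧
      ((n : ℝ) ^ (-α)) ^ 2 ≤ c * ((n : ℝ) ^ (-β)) ^ 2 := by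
  have hrpow {x : ℝ} (hx : 0 < x) : Tendsto (fun n : ℕ => (n : ℝ) ^ (-x)) atTop (nhds 0) :=
    (tendsto_rpow_neg_atTop hx).comp tendsto_natCast_atTop_atTop
  have hδ : Tendsto (fun n : ℕ => ((d : ℝ) + 2) * (n : ℝ) ^ (-β)) atTop (nhds 0) := by
    simpa using (hrpow hβ).const_mul ((d : ℝ) + 2)
  have hratio : Tendsto (fun n : ℕ => ((n : ℝ) ^ (-(α - β))) ^ 2) atTop (nhds 0) := by
    simpa using (hrpow (sub_pos.mpr hβα)).pow 2
  filter_upwards [eventually_gt_atTop 0, hratio.eventually_le_const hc,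
    (hrpow (hβ.trans hβα)).eventually_le_const (by norm_num : (0 : ℝ) < 1 / 2),
    hδ.eventually_le_const (by norm_num : (0 : ℝ) < 1 / 4)] with n hn hcn hεn hδn
  have hn' : (0 : ℝ) < n := by exact_mod_cast hn
  refine ⟨hεn, hδn, ?_⟩
  calc ((n : ℝ) ^ (-α)) ^ 2 = ((n : ℝ) ^ (-(α - β))) ^ 2 * ((n : ℝ) ^ (-β)) ^ 2 := by
        rw [← mul_pow, ← Real.rpow_add hn']
        ring_nf
    _ ≤ c * ((n : ℝ) ^ (-β)) ^ 2 := by gcongr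

theorem localizationError_le (d : ℕ) {n : ℕ} (hn : 1 ≤ n) (α β l : ℝ) :
    2 ^ d / (n : ℝ) ^ (-α) * ((n + 1) * Real.exp (-(l * ((n : ℝ) ^ (-β)) ^ 2)) ^ n)
      ≤ 2 ^ (d + 1) * (n : ℝ) ^ (1 + α) * Real.exp (-l * (n : ℝ) ^ (1 - 2 * β)) := by
  have hn1 : (1 : ℝ) ≤ n := by exact_mod_cast hn
  have hn0 : (0 : ℝ) < n := by linarith
  have hexp : Real.exp (-(l * ((n : ℝ) ^ (-β)) ^ 2)) ^ n
      = Real.exp (-l * (n : ℝ) ^ (1 - 2 * β)) := by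
    have hβ : 1 - 2 * β = 1 + -β * (2 : ℕ) := by
      push_cast
      ring
    rw [← Real.exp_nat_mul, hβ, Real.rpow_add hn0, Real.rpow_one, Real.rpow_mul_natCast hn0.le]
    ring_nf
  calc _ = 2 ^ d * (n : ℝ) ^ α * ((n + 1) * Real.exp (-l * (n : ℝ) ^ (1 - 2 * β))) := by
        rw [hexp, Real.rpow_neg hn0.le, div_inv_eq_mul]
    _ ≤ 2 ^ d * (n : ℝ) ^ α * ((n + n) * Real.exp (-l * (n : ℝ) ^ (1 - 2 * β))) := by gcongr
    _ = _ := by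
        rw [Real.rpow_add hn0, Real.rpow_one]
        ring

end Localization

end ZeroDrift

theorem localization_general
    (d : ℕ) (S : Finset (Fin (d + 1) → ℤ)) (w : (Fin (d + 1) → ℤ) → ℝ)
    (hstep : ∀ i ∈ S, ∀ j, i j = -1 ∨ i j = 0 ∨ i j = 1)
    (hw : ∀ i ∈ S, 0 < w i)
    (hsym : ∀ k : Fin d, SymmetricAxis (d + 1) S w (Fin.castSucc k))
    (hfwd : ∀ k : Fin (d + 1), ∃ i ∈ S, i k = 1)
    (hdrift : ∑ i ∈ S.filter fun i => i (Fin.last d) = 1, w i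
        ≤ ∑ i ∈ S.filter fun i => i (Fin.last d) = -1, w i)
    (α β : ℝ) (hβ0 : 0 < β) (hβα : β < α) (hβ2 : β < 1 / 2)
    (γ : ℝ) (hγ0 : 0 < γ) (hγ1 : γ < 1) :
    ∃ e : ℕ → ℝ,
      (∀ m : ℕ, Tendsto (fun n : ℕ => (n : ℝ) ^ m * e n) atTop (nhds 0)) ∧
      ∀ᶠ n : ℕ in atTop,
        ‖(walkWeight (d + 1) S w n : ℂ) -
            ZeroDrift.fullIntegral d S w n ((n : ℝ) ^ (-α)) ((n : ℝ) ^ (-β))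
              ((1 - γ) / ZeroDrift.S1 d S w)‖
          ≤ ZeroDrift.S1 d S w ^ n * e n := by
  obtain ⟨l, hl, c, hc, hbound⟩ := ZeroDrift.exists_norm_walkWeight_sub_fullIntegral_le
    hstep hw hsym hfwd hdrift hγ0 hγ1
  have hS1 : 0 ≤ ZeroDrift.S1 d S w := sum_nonneg fun i hi => (hw i hi).le
  refine ⟨_, ZeroDrift.tendsto_pow_mul_stretched_exp (2 ^ (d + 1)) (1 + α)
    (by linarith : 0 < 1 - 2 * β) hl, ?_⟩
  filter_upwards [eventually_ge_atTop 1, ZeroDrift.eventually_scales_small d hβ0 hβα hc]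
    with n hn ⟨hε, hδ, hεδ⟩
  have hn0 : (0 : ℝ) < n := by exact_mod_cast hn
  exact (hbound n _ _ (Real.rpow_pos_of_pos hn0 _) hε (Real.rpow_pos_of_pos hn0 _) hδ hεδ).trans
    (mul_le_mul_of_nonneg_left (ZeroDrift.localizationError_le d hn α β l) (pow_nonneg hS1 n))

/-- Lemma (localization): restricting the Cauchy integral to the neighbourhoods `N`
of the points of `Γ` introduces an error `O(S(1)^n e_n)` with `e_n` decaying faster
than any fixed power of `n`. -/
theorem localization
    (d : ℕ) (S : Finset (Fin (d + 1) → ℤ)) (w : (Fin (d + 1) → ℤ) → ℝ)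
    (hstep : ∀ i ∈ S, (∀ j, i j = -1 ∨ i j = 0 ∨ i j = 1) ∧ i ≠ 0)
    (hw : ∀ i ∈ S, 0 < w i)
    (hsym : ∀ k : Fin d, SymmetricAxis (d + 1) S w (Fin.castSucc k))
    (hfwd : ∀ k : Fin (d + 1), ∃ i ∈ S, i k = 1)
    (hbwd : ∀ k : Fin (d + 1), ∃ i ∈ S, i k = -1)
    (hzero : (∑ i ∈ S.filter fun i => i (Fin.last d) = -1, w i)
        = ∑ i ∈ S.filter fun i => i (Fin.last d) = 1, w i)
    (α β : ℝ) (hα : 1 / 2 < α) (hαβ : α < 2 * β) (hsum : 1 < α + β)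
    (hβ1 : 1 / 3 < β) (hβ2 : β < 1 / 2)
    (γ : ℝ) (hγ0 : 0 < γ) (hγ1 : γ < 1) :
    ∃ e : ℕ → ℝ,
      (∀ m : ℕ, Tendsto (fun n : ℕ => (n : ℝ) ^ m * e n) atTop (nhds 0)) ∧
      ∀ᶠ n : ℕ in atTop,
        ‖(walkWeight (d + 1) S w n : ℂ) -
            ZeroDrift.fullIntegral d S w n ((n : ℝ) ^ (-α)) ((n : ℝ) ^ (-β))
              ((1 - γ) / ZeroDrift.S1 d S w)‖
          ≤ ZeroDrift.S1 d S w ^ n * e n := by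
  exact localization_general d S w (fun i hi => (hstep i hi).1) hw hsym hfwd hzero.ge α β
    (by linarith) (by linarith) hβ2 γ hγ0 hγ1

end
end
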